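/- arXiv:2006.06307 — 6 statements merged into one kernel-verified Lean document; each statement's English description precedes it below -/
import Mathlib

section
/- Let σ₄ be the morphism on ternary words defined by σ₄(0) = 0012, σ₄(1) = 112, σ₄(2) = 022. For every n ≥ 0, the word σ₄ⁿ(0) avoids abelian 3-powers cyclically. Consequently there exist arbitrarily long ternary words avoiding abelian 3-powers cyclically, i.e. A_∞(3) ≤ 3. -/
/-- `u` is an abelian `N`-power of period `m`: a concatenation of `N` nonempty
pairwise abelian-equivalent words of common length `m`. -/
def IsAbelianPower {α : Type*} (N m : ℕ) (u : List α) : Prop :=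
  0 < m ∧ ∃ f : Fin N → List α,
    u = (List.ofFn f).flatten ∧ (∀ i, (f i).length = m) ∧ ∀ i j, List.Perm (f i) (f j)

/-- `u` occurs in the infinite word `w^ω`, i.e. `u` is a factor of `w^k` for some `k`. -/
def OccursCyc {α : Type*} (w u : List α) : Prop :=
  ∃ k : ℕ, u <:+: (List.replicate k w).flatten

/-- `w` avoids abelian `N`-powers cyclically: every abelian `N`-power of period `m`
occurring in `w^ω` satisfies `m ≥ |w|`. -/
def AvoidsAbelianCyc {α : Type*} (N : ℕ) (w : List α) : Prop :=
  ∀ m u, IsAbelianPower N m u → OccursCyc w u → w.length ≤ m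

/-- Application of a morphism given by its images on letters. -/
def applyMorphism {α β : Type*} (σ : α → List β) (w : List α) : List β :=
  (w.map σ).flatten

/-- Dekking's morphism σ₄ : 0 ↦ 0012, 1 ↦ 112, 2 ↦ 022. -/
def sigma4 : Fin 3 → List (Fin 3) := fun a =>
  if a = 0 then [0, 0, 1, 2] else if a = 1 then [1, 1, 2] else [0, 2, 2]

/-!
An abelian `N`-power in `σ(x)` is cut out by `N + 1` prefixes whose Parikh vectors form an
arithmetic progression. Give letters weights in a commutative monoid so that images of letters
have weight `0`; the weights of the cuts then form an arithmetic progression among the weights of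
prefixes of images of letters. If these contain no nonconstant such progression, all cuts have the
same weight, and if the weight of a cut determines its displacement from a nearby boundary of an
image, the cuts can be shifted simultaneously to such boundaries. As the incidence matrix is
injective, they come from an abelian `N`-power in `x`. When `x` is a power of `w`, the period of
the latter is at least `|w|`, so each of its blocks contains a conjugate of `w`, and the images of
these blocks have length at least `|σ(w)|`. For `σ₄` one takes weights `1, 2, 3` modulo `7`: the
prefixes have weights `0, 1, 2, 4`, among which there is no nonconstant progression of four terms.
-/

/-- The incidence matrix of a morphism, as an additive map on Parikh vectors. The Parikh vector of a
word is encoded as its underlying multiset of letters. -/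
def incidence {α β : Type*} (σ : α → List β) : Multiset α →+ Multiset β :=
  Multiset.sumAddMonoidHom.comp (Multiset.mapAddMonoidHom fun a => (σ a : Multiset β))

/-- Abelian `N`-powers with block `U` seen through cut points: `x` has prefixes `P 0, …, P N` whose
Parikh vectors form an arithmetic progression with difference `U`. -/
def HasPrefixProgression {α : Type*} (N : ℕ) (x : List α) (U : Multiset α) : Prop :=
  ∃ P : ℕ → List α, ∀ i ≤ N, P i <+: x ∧ (P i : Multiset α) = P 0 + i • U

/-- The weights of the prefixes of the images of letters under `σ`. -/
def prefixWeights {α β G : Type*} [AddCommMonoid G] (σ : α → List β) (φ : Multiset β →+ G) :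
    Set G :=
  {g | ∃ a p, p <+: σ a ∧ φ p = g}

/-- Dekking's condition for a morphism to preserve avoidance of abelian `N`-powers, with respect to
a weight `φ`. The field `exists_offset` is a commutative form of Dekking's `φ`-injectivity: the
weight of a prefix `p` of `σ a` determines the displacement `S - D`, in Parikh vectors, from one of
the two ends of `σ a` to the cut after `p`. -/
structure DekkingCondition {α β G : Type*} [AddCommMonoid G] (N : ℕ) (σ : α → List β)
    (φ : Multiset β →+ G) : Prop where
  weight_image (a : α) : φ (σ a) = 0
  eq_zero_of_progression (g d : G) : (∀ i ≤ N, g + i • d ∈ prefixWeights σ φ) → d = 0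
  exists_offset (g : G) : ∃ S D : Multiset β, ∀ a p, p <+: σ a → φ p = g →
    (p : Multiset β) + D = S ∨ (p : Multiset β) + D = σ a + S
  incidence_injective : Function.Injective (incidence σ)

section Morphisms

variable {α β : Type*} (σ : α → List β)

lemma applyMorphism_append (x y : List α) :
    applyMorphism σ (x ++ y) = applyMorphism σ x ++ applyMorphism σ y := by
  simp [applyMorphism]

lemma applyMorphism_singleton (a : α) : applyMorphism σ [a] = σ a := by
  simp [applyMorphism]

lemma applyMorphism_flatten_replicate (k : ℕ) (w : List α) :
    applyMorphism σ (List.replicate k w).flatten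
      = (List.replicate k (applyMorphism σ w)).flatten := by
  induction k with
  | zero => rfl
  | succ k ih =>
    simp only [List.replicate_succ, List.flatten_cons, applyMorphism_append, ih]

lemma coe_applyMorphism (w : List α) :
    (applyMorphism σ w : Multiset β) = incidence σ w := by
  simpa [incidence, applyMorphism, List.flatMap, Multiset.bind, Multiset.join] using
    (Multiset.coe_bind w σ).symm

lemma incidence_singleton (a : α) : incidence σ {a} = σ a := by
  simp [incidence]

lemma count_incidence [Fintype α] [DecidableEq α] [DecidableEq β] (M : Multiset α) (b : β) :
    (incidence σ M).count b = ∑ a, M.count a * (σ a).count b := by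
  induction M using Multiset.induction_on with
  | empty => simp
  | cons a M ih =>
    simp [← Multiset.singleton_add, incidence_singleton, ih, add_mul, Finset.sum_add_distrib,
      Multiset.count_singleton]

lemma card_incidence_mono {M M' : Multiset α} (h : M ≤ M') :
    (incidence σ M).card ≤ (incidence σ M').card := by
  obtain ⟨K, rfl⟩ := Multiset.le_iff_exists_add.1 h
  simp

variable {σ}

lemma exists_prefix_of_prefix_applyMorphism {x : List α} (hx : x ≠ []) {P : List β}
    (hP : P <+: applyMorphism σ x) :
    ∃ y a p, y ++ [a] <+: x ∧ p <+: σ a ∧ P = applyMorphism σ y ++ p := by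
  induction x using List.reverseRecOn with
  | nil => exact absurd rfl hx
  | append_singleton x a ih =>
    rw [applyMorphism_append, applyMorphism_singleton] at hP
    rcases List.prefix_or_prefix_of_prefix hP (List.prefix_append _ _) with hPx | ⟨p, rfl⟩
    · rcases eq_or_ne x [] with rfl | hne
      · exact ⟨[], a, [], List.prefix_rfl, List.nil_prefix, List.prefix_nil.1 hPx⟩
      · obtain ⟨y, b, p, hy, hp, rfl⟩ := ih hne hPx
        exact ⟨y, b, p, hy.trans (List.prefix_append _ _), hp, rfl⟩
    · exact ⟨x, a, p, List.prefix_rfl, (List.prefix_append_right_inj _).1 hP, rfl⟩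

lemma mul_length_le_length_applyMorphism {c : ℕ} (hσ : ∀ a, c ≤ (σ a).length) (w : List α) :
    c * w.length ≤ (applyMorphism σ w).length := by
  induction w with
  | nil => simp
  | cons a w ih =>
    have h : (applyMorphism σ (a :: w)).length = (σ a).length + (applyMorphism σ w).length := by
      simp [applyMorphism]
    rw [h, List.length_cons, mul_add_one, add_comm]
    exact add_le_add (hσ a) ih

lemma pow_mul_length_le_length_iterate {σ : α → List α} {c : ℕ} (hσ : ∀ a, c ≤ (σ a).length)
    (n : ℕ) (w : List α) : c ^ n * w.length ≤ ((applyMorphism σ)^[n] w).length := by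
  induction n with
  | zero => simp
  | succ n ih =>
    rw [Function.iterate_succ_apply', pow_succ', mul_assoc]
    exact (Nat.mul_le_mul_left c ih).trans (mul_length_le_length_applyMorphism hσ _)

end Morphisms

section Words

variable {α : Type*} {N : ℕ} {x : List α}

lemma exists_append_of_prefix_of_coe_eq_add {y z : List α} {V : Multiset α} (hy : y <+: x)
    (hz : z <+: x) (h : (z : Multiset α) = y + V) : ∃ v, z = y ++ v ∧ (v : Multiset α) = V := by
  have hle : y.length ≤ z.length := by simp [← Multiset.coe_card, h]
  obtain ⟨v, rfl⟩ := List.prefix_of_prefix_length_le hy hz hle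
  exact ⟨v, rfl, by simpa only [← Multiset.coe_add, add_right_inj] using h⟩

lemma coe_flatten_eq_nsmul {L : List (List α)} {U : Multiset α}
    (hL : ∀ v ∈ L, (v : Multiset α) = U) : (L.flatten : Multiset α) = L.length • U := by
  induction L with
  | nil => simp
  | cons v L ih =>
    rw [List.forall_mem_cons] at hL
    rw [List.flatten_cons, ← Multiset.coe_add, hL.1, ih hL.2, List.length_cons, succ_nsmul']

lemma IsAbelianPower.hasPrefixProgression {m : ℕ} {u : List α} (hu : IsAbelianPower N m u)
    (hN : N ≠ 0) (hux : u <:+: x) : ∃ U, U.card = m ∧ HasPrefixProgression N x U := by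
  obtain ⟨-, f, rfl, hlen, hperm⟩ := hu
  obtain ⟨p, s, rfl⟩ := hux
  let i₀ : Fin N := ⟨0, Nat.pos_of_ne_zero hN⟩
  refine ⟨f i₀, hlen i₀, fun i => p ++ ((List.ofFn f).take i).flatten, fun i hi => ⟨?_, ?_⟩⟩
  · rw [List.append_assoc, List.prefix_append_right_inj]
    exact (List.take_prefix i _).flatten.trans (List.prefix_append _ _)
  · have hblock : ∀ v ∈ (List.ofFn f).take i, (v : Multiset α) = f i₀ := fun v hv => by
      obtain ⟨j, rfl⟩ := List.mem_ofFn.1 (List.mem_of_mem_take hv)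
      exact Multiset.coe_eq_coe.2 (hperm j i₀)
    rw [← Multiset.coe_add, coe_flatten_eq_nsmul hblock, List.length_take_of_le (by simpa using hi)]
    simp

lemma HasPrefixProgression.exists_infix {U : Multiset α} (h : HasPrefixProgression N x U)
    (hN : N ≠ 0) : ∃ v, v <:+: x ∧ (v : Multiset α) = U := by
  obtain ⟨P, hP⟩ := h
  obtain ⟨h₀, -⟩ := hP 0 (Nat.zero_le N)
  obtain ⟨h₁, hU⟩ := hP 1 (Nat.one_le_iff_ne_zero.2 hN)
  rw [one_nsmul] at hU
  obtain ⟨v, hv, hvU⟩ := exists_append_of_prefix_of_coe_eq_add h₀ h₁ hU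
  exact ⟨v, (hv ▸ List.suffix_append _ _ : v <:+ P 1).isInfix.trans h₁.isInfix, hvU⟩

lemma HasPrefixProgression.ne_nil {U : Multiset α} (h : HasPrefixProgression N x U) (hN : N ≠ 0)
    (hU : U ≠ 0) : x ≠ [] := by
  rintro rfl
  obtain ⟨v, hv, rfl⟩ := h.exists_infix hN
  exact hU (by rw [List.infix_nil.1 hv, Multiset.coe_nil])

lemma HasPrefixProgression.exists_isAbelianPower {U : Multiset α}
    (h : HasPrefixProgression N x U) (hU : U ≠ 0) :
    ∃ u, u <:+: x ∧ IsAbelianPower N U.card u := by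
  obtain ⟨P, hP⟩ := h
  have hblock : ∀ i < N, ∃ v, P (i + 1) = P i ++ v ∧ (v : Multiset α) = U := fun i hi =>
    exists_append_of_prefix_of_coe_eq_add (hP i hi.le).1 (hP (i + 1) hi).1 <| by
      rw [(hP i hi.le).2, (hP (i + 1) hi).2, succ_nsmul, add_assoc]
  choose! v hPv hvU using hblock
  have hconcat : ∀ n ≤ N, P 0 ++ (List.ofFn fun i : Fin n => v i).flatten = P n := by
    intro n hn
    induction n with
    | zero => simp
    | succ n ih =>
      simp only [List.ofFn_succ_last, List.flatten_append, List.flatten_singleton,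
        Fin.val_castSucc, Fin.val_last]
      rw [← List.append_assoc, ih (Nat.le_of_succ_le hn), hPv n hn]
  refine ⟨(List.ofFn fun i : Fin N => v i).flatten, ?_, Multiset.card_pos.2 hU,
    fun i => v i, rfl, fun i => ?_, fun i j => ?_⟩
  · exact (hconcat N le_rfl ▸ List.suffix_append _ _ : _ <:+ P N).isInfix.trans
      (hP N le_rfl).1.isInfix
  · rw [← hvU i i.isLt, Multiset.coe_card]
  · rw [← Multiset.coe_eq_coe, hvU i i.isLt, hvU j j.isLt]

lemma OccursCyc.subperm {w v : List α} (h : OccursCyc w v) (hl : w.length ≤ v.length) :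
    w.Subperm v := by
  obtain ⟨k, p, s, h⟩ := h
  induction k generalizing p with
  | zero =>
    obtain ⟨-, rfl, -⟩ : p = [] ∧ v = [] ∧ s = [] := by simpa [and_assoc] using h
    exact List.length_eq_zero_iff.1 (Nat.le_zero.1 hl) ▸ List.Subperm.refl _
  | succ k ih =>
    rw [List.replicate_succ, List.flatten_cons, List.append_assoc,
      List.append_eq_append_iff] at h
    rcases h with ⟨t, hw, hvs⟩ | ⟨q, -, hq⟩
    · -- `v` starts inside the first copy `p ++ t` of `w`, hence with the conjugate `t ++ p` of `w`.
      have hcomm : t ++ p <+: v ++ s ++ w := by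
        rw [hvs, List.append_assoc, List.prefix_append_right_inj]
        have hrotate : (List.replicate k w).flatten ++ w = w ++ (List.replicate k w).flatten := by
          simpa [List.replicate_succ] using
            congrArg List.flatten (List.replicate_succ' (n := k) (a := w)).symm
        rw [hrotate, hw, List.append_assoc]
        exact List.prefix_append _ _
      have hconj : (t ++ p).Perm w := hw ▸ List.perm_append_comm
      have hpre : t ++ p <+: v := List.prefix_of_prefix_length_le hcomm
        (List.append_assoc v s w ▸ List.prefix_append _ _) (hconj.length_eq.trans_le hl)
      exact hconj.symm.subperm.trans hpre.sublist.subperm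
    · exact ih q (by rw [List.append_assoc, ← hq])

lemma avoidsAbelianCyc_singleton (N : ℕ) (a : α) : AvoidsAbelianCyc N [a] :=
  fun _ _ hu _ => hu.1

end Words

namespace DekkingCondition

variable {α β G : Type*} [AddCommMonoid G] {N : ℕ} {σ : α → List β} {φ : Multiset β →+ G}

lemma weight_incidence (h : DekkingCondition N σ φ) (M : Multiset α) :
    φ (incidence σ M) = 0 := by
  have hzero : φ.comp (incidence σ) = 0 := Multiset.addHom_ext fun a => by
    simp [incidence_singleton, h.weight_image]
  exact DFunLike.congr_fun hzero M

lemma weight_append (h : DekkingCondition N σ φ) (y : List α) (p : List β) :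
    φ (applyMorphism σ y ++ p : List β) = φ p := by
  rw [← Multiset.coe_add, map_add, coe_applyMorphism, h.weight_incidence, zero_add]

lemma weight_mem_prefixWeights (h : DekkingCondition N σ φ) {x : List α} (hx : x ≠ [])
    {P : List β} (hP : P <+: applyMorphism σ x) : φ P ∈ prefixWeights σ φ := by
  obtain ⟨y, a, p, -, hp, rfl⟩ := exists_prefix_of_prefix_applyMorphism hx hP
  exact ⟨a, p, hp, (h.weight_append y p).symm⟩

lemma exists_aligned_prefix (h : DekkingCondition N σ φ) {x : List α} (hx : x ≠ []) (g : G) :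
    ∃ S D : Multiset β, ∀ P, P <+: applyMorphism σ x → φ P = g →
      ∃ y, y <+: x ∧ (P : Multiset β) + D = incidence σ y + S := by
  obtain ⟨S, D, hSD⟩ := h.exists_offset g
  refine ⟨S, D, fun P hP hPg => ?_⟩
  obtain ⟨y, a, p, hya, hp, rfl⟩ := exists_prefix_of_prefix_applyMorphism hx hP
  rw [h.weight_append] at hPg
  rw [← Multiset.coe_add, coe_applyMorphism, add_assoc]
  rcases hSD a p hp hPg with hstart | hend
  · exact ⟨y, (List.prefix_append _ _).trans hya, by rw [hstart]⟩
  · refine ⟨y ++ [a], hya, ?_⟩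
    rw [hend, ← Multiset.coe_add, map_add, Multiset.coe_singleton, incidence_singleton, add_assoc]

lemma weight_difference_eq_zero (h : DekkingCondition N σ φ) {x : List α} (hx : x ≠ [])
    {U : Multiset β} (hU : HasPrefixProgression N (applyMorphism σ x) U) : φ U = 0 := by
  obtain ⟨P, hP⟩ := hU
  refine h.eq_zero_of_progression (φ (P 0)) (φ U) fun i hi => ?_
  rw [← map_nsmul, ← map_add, ← (hP i hi).2]
  exact h.weight_mem_prefixWeights hx (hP i hi).1

lemma exists_incidence_progression (h : DekkingCondition N σ φ) {x : List α} (hx : x ≠ [])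
    {U : Multiset β} (hU : HasPrefixProgression N (applyMorphism σ x) U) :
    ∃ Y : ℕ → List α, ∀ i ≤ N, Y i <+: x ∧ incidence σ (Y i) = incidence σ (Y 0) + i • U := by
  have hφU : φ U = 0 := h.weight_difference_eq_zero hx hU
  obtain ⟨P, hP⟩ := hU
  have hweight : ∀ i ≤ N, φ (P i) = φ (P 0) := fun i hi => by
    rw [(hP i hi).2, map_add, map_nsmul, hφU, nsmul_zero, add_zero]
  obtain ⟨S, D, hSD⟩ := h.exists_aligned_prefix hx (φ (P 0))
  choose! Y hYx hY using fun i (hi : i ≤ N) => hSD (P i) (hP i hi).1 (hweight i hi)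
  refine ⟨Y, fun i hi => ⟨hYx i hi, add_right_cancel (b := S) ?_⟩⟩
  calc incidence σ (Y i) + S = P 0 + i • U + D := by rw [← hY i hi, (hP i hi).2]
    _ = P 0 + D + i • U := add_right_comm _ _ _
    _ = incidence σ (Y 0) + i • U + S := by rw [hY 0 (Nat.zero_le N), add_right_comm]

lemma exists_hasPrefixProgression (h : DekkingCondition N σ φ) (hN : N ≠ 0) {x : List α}
    (hx : x ≠ []) {U : Multiset β} (hU : HasPrefixProgression N (applyMorphism σ x) U) :
    ∃ V, incidence σ V = U ∧ HasPrefixProgression N x V := by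
  obtain ⟨Y, hY⟩ := h.exists_incidence_progression hx hU
  obtain ⟨h₁x, h₁⟩ := hY 1 (Nat.one_le_iff_ne_zero.2 hN)
  rw [one_nsmul] at h₁
  obtain ⟨V, hV⟩ : ∃ V, incidence σ V = U := by
    rcases List.prefix_or_prefix_of_prefix (hY 0 (Nat.zero_le N)).1 h₁x with ⟨v, hv⟩ | ⟨v, hv⟩
    · refine ⟨v, ?_⟩
      rwa [← hv, ← Multiset.coe_add, map_add, add_right_inj] at h₁
    · rw [← hv, ← Multiset.coe_add, map_add, add_assoc, left_eq_add, add_eq_zero] at h₁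
      exact ⟨0, by rw [map_zero, h₁.2]⟩
  refine ⟨V, hV, Y, fun i hi => ⟨(hY i hi).1, h.incidence_injective ?_⟩⟩
  rw [(hY i hi).2, map_add, map_nsmul, hV]

theorem avoidsAbelianCyc (h : DekkingCondition N σ φ) (hN : N ≠ 0) {w : List α}
    (hw : AvoidsAbelianCyc N w) : AvoidsAbelianCyc N (applyMorphism σ w) := by
  rintro m u hu ⟨k, hk⟩
  rw [← applyMorphism_flatten_replicate] at hk
  obtain ⟨U, rfl, hU⟩ := hu.hasPrefixProgression hN hk
  have hU₀ : U ≠ 0 := Multiset.card_pos.1 hu.1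
  have hx : (List.replicate k w).flatten ≠ [] := fun hx =>
    hU.ne_nil hN hU₀ (by rw [hx, applyMorphism, List.map_nil, List.flatten_nil])
  obtain ⟨V, rfl, hV⟩ := h.exists_hasPrefixProgression hN hx hU
  have hV₀ : V ≠ 0 := fun hV₀ => hU₀ (by rw [hV₀, map_zero])
  obtain ⟨u', hu'x, hu'⟩ := hV.exists_isAbelianPower hV₀
  obtain ⟨v, hvx, rfl⟩ := hV.exists_infix hN
  have hwv : w.Subperm v := OccursCyc.subperm ⟨k, hvx⟩ (hw _ u' hu' ⟨k, hu'x⟩)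
  rw [← Multiset.coe_card, coe_applyMorphism]
  exact card_incidence_mono σ (Multiset.coe_le.2 hwv)

lemma avoidsAbelianCyc_iterate {σ : α → List α} {φ : Multiset α →+ G} (h : DekkingCondition N σ φ)
    (hN : N ≠ 0) {w : List α} (hw : AvoidsAbelianCyc N w) (n : ℕ) :
    AvoidsAbelianCyc N ((applyMorphism σ)^[n] w) := by
  induction n with
  | zero => exact hw
  | succ n ih =>
    rw [Function.iterate_succ_apply']
    exact h.avoidsAbelianCyc hN ih

end DekkingCondition

section Sigma4

/-- The weight modulo `7` giving the letters `0`, `1`, `2` weights `1`, `2`, `3`, for which every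
image `sigma4 a` has total weight exactly `7`. -/
def sigma4Weight : Multiset (Fin 3) →+ ZMod 7 :=
  Multiset.sumAddMonoidHom.comp (Multiset.mapAddMonoidHom fun a : Fin 3 => (a.val + 1 : ZMod 7))

lemma prefixWeights_sigma4 : prefixWeights sigma4 sigma4Weight ⊆ {0, 1, 2, 4} := by
  rintro _ ⟨a, p, hp, rfl⟩
  have hweights : ∀ a, ∀ p ∈ (sigma4 a).inits,
      sigma4Weight p ∈ ({0, 1, 2, 4} : Finset (ZMod 7)) := by
    decide
  simpa using hweights a p ((List.mem_inits _ _).2 hp)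

lemma count_incidence_sigma4 (M : Multiset (Fin 3)) :
    (incidence sigma4 M).count 0 = M.count 0 * 2 + M.count 2 ∧
    (incidence sigma4 M).count 1 = M.count 0 + M.count 1 * 2 ∧
    (incidence sigma4 M).count 2 = M.count 0 + M.count 1 + M.count 2 * 2 := by
  simp [count_incidence, Fin.sum_univ_three, sigma4]

lemma incidence_sigma4_injective : Function.Injective (incidence sigma4) := by
  intro M M' h
  obtain ⟨h₀, h₁, h₂⟩ := count_incidence_sigma4 M
  obtain ⟨h₀', h₁', h₂'⟩ := count_incidence_sigma4 M'
  rw [h] at h₀ h₁ h₂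
  have hcount : M.count 0 = M'.count 0 ∧ M.count 1 = M'.count 1 ∧ M.count 2 = M'.count 2 := by
    omega
  exact Multiset.ext.2 (Fin.forall_fin_succ.2 ⟨hcount.1, Fin.forall_fin_two.2 hcount.2⟩)

lemma exists_sigma4_offset (g : ZMod 7) : ∃ S D : Multiset (Fin 3), ∀ a p, p <+: sigma4 a →
    sigma4Weight p = g →
      (p : Multiset (Fin 3)) + D = S ∨ (p : Multiset (Fin 3)) + D = sigma4 a + S := by
  -- Cuts of weight `1`, `2`, `4` lie after a prefix `0`, before a suffix `12`, before a suffix `2`.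
  let S : ZMod 7 → Multiset (Fin 3) := fun g => if g = 1 then {0} else 0
  let D : ZMod 7 → Multiset (Fin 3) := fun g =>
    if g = 2 then {1, 2} else if g = 4 then {2} else 0
  have hoffset : ∀ a, ∀ p ∈ (sigma4 a).inits,
      (p : Multiset (Fin 3)) + D (sigma4Weight p) = S (sigma4Weight p) ∨
      (p : Multiset (Fin 3)) + D (sigma4Weight p) = sigma4 a + S (sigma4Weight p) := by
    decide
  refine ⟨S g, D g, ?_⟩
  rintro a p hp rfl
  exact hoffset a p ((List.mem_inits _ _).2 hp)

theorem dekkingCondition_sigma4 : DekkingCondition 3 sigma4 sigma4Weight where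
  weight_image := by decide
  eq_zero_of_progression g d h := by
    have hfree : ∀ g d : ZMod 7,
        (∀ i ≤ 3, g + i • d ∈ ({0, 1, 2, 4} : Finset (ZMod 7))) → d = 0 := by
      decide
    exact hfree g d fun i hi => by simpa using prefixWeights_sigma4 (h i hi)
  exists_offset := exists_sigma4_offset
  incidence_injective := incidence_sigma4_injective

end Sigma4

theorem sigma4_iterates_avoid_abelian_3_powers_cyclically :
    (∀ n : ℕ, AvoidsAbelianCyc 3 ((applyMorphism sigma4)^[n] [(0 : Fin 3)])) ∧
    (∀ n : ℕ, ∃ w : List (Fin 3), n ≤ w.length ∧ AvoidsAbelianCyc 3 w) := by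
  have havoid (n : ℕ) : AvoidsAbelianCyc 3 ((applyMorphism sigma4)^[n] [(0 : Fin 3)]) :=
    dekkingCondition_sigma4.avoidsAbelianCyc_iterate three_ne_zero
      (avoidsAbelianCyc_singleton 3 0) n
  have hlength (n : ℕ) : n ≤ ((applyMorphism sigma4)^[n] [(0 : Fin 3)]).length :=
    calc n ≤ 3 ^ n * [(0 : Fin 3)].length := by simpa using (Nat.lt_pow_self (by norm_num)).le
      _ ≤ _ := pow_mul_length_le_length_iterate (by decide) n _
  exact ⟨havoid, fun n => ⟨_, hlength n, havoid n⟩⟩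
end

section
/- For every positive integer n there exists a word of length at least n over a 4-letter alphabet that avoids abelian 2-powers cyclically; that is, there exist arbitrarily long words over 4 letters avoiding abelian squares cyclically, so A_∞(4) = 2. -/
/-!
The Keränen morphism sends a letter `b` modulo 4 to a word of length 85, obtained by adding `b` to
every letter of the image of `0`. Its incidence matrix has determinant 43435 and cyclic cokernel, so
there is a weight on letters for which the image of every letter weighs `0` modulo 43435, and whose
four cyclic shifts recover the Parikh vector of a word from its image. The weights of the prefixes
ending at the three cuts of an abelian square in the image form an arithmetic progression. Modulo
43435 this depends only on how the cuts sit in their blocks, and a finite check shows that each cut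
can then be moved to an end of its block without disturbing the progression, for all four shifts of
the weight at once. So an abelian square in the image comes from one in the preimage, unless its
pulled-back period is zero; in that case it lies within two consecutive blocks, which a second
finite check excludes. The morphism therefore maps words that avoid abelian squares cyclically to
words 85 times as long with the same property, and it can be iterated starting from `012`.
-/

section InfiniteWords

open Finset Function

variable {α M : Type*} {x : ℕ → α} {p m L : ℕ}

/-- The Parikh vector of the prefix of length `n` of the infinite word `x`, encoded as the multiset
of its letters. -/
def parikh (x : ℕ → α) (n : ℕ) : Multiset α :=
  (Multiset.range n).map x

theorem parikh_zero (x : ℕ → α) : parikh x 0 = 0 :=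
  rfl

theorem parikh_succ (x : ℕ → α) (n : ℕ) : parikh x (n + 1) = x n ::ₘ parikh x n := by
  simp only [parikh, Multiset.range_succ, Multiset.map_cons]

theorem card_parikh (x : ℕ → α) (n : ℕ) : (parikh x n).card = n := by
  simp only [parikh, Multiset.card_map, Multiset.card_range]

theorem sum_map_parikh [AddCommMonoid M] (v : α → M) (x : ℕ → α) (n : ℕ) :
    ((parikh x n).map v).sum = ∑ s ∈ range n, v (x s) := by
  rw [parikh, Multiset.map_map]
  rfl

theorem parikh_add_period (hx : Periodic x L) (n : ℕ) :
    parikh x (n + L) = parikh x n + parikh x L := by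
  induction n with
  | zero => rw [zero_add, parikh_zero, zero_add]
  | succ n ih => rw [add_right_comm, parikh_succ, hx, ih, parikh_succ, Multiset.cons_add]

theorem coe_eq_parikh_of_append_eq {s t : List α} {N : ℕ} (h : s ++ t = (List.range N).map x) :
    (s : Multiset α) = parikh x s.length := by
  have hlen : s.length ≤ N := by
    simpa only [List.length_map, List.length_range] using List.IsPrefix.length_le ⟨t, h⟩
  have hs : s = (List.range s.length).map x := by
    rw [← min_eq_left hlen, ← List.take_range, List.map_take, ← h, List.take_left]
  exact congrArg _ hs

theorem flatten_replicate_map_range (hx : Periodic x L) (k : ℕ) :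
    (List.replicate k ((List.range L).map x)).flatten = (List.range (L * k)).map x := by
  induction k with
  | zero => simp
  | succ k ih =>
    have hshift : x ∘ (L + ·) = x := funext fun n => by rw [comp_apply, add_comm, hx]
    rw [List.replicate_succ, List.flatten_cons, ih, Nat.mul_succ, add_comm, List.range_add,
      List.map_append, List.map_map, hshift]

/-- The infinite word `x` has an abelian square of period `m` starting at position `p`. In terms of
prefixes: the Parikh vectors of `x` at `p`, `p + m`, `p + 2 * m` are in arithmetic progression. -/
def IsAbelianSquareAt (x : ℕ → α) (p m : ℕ) : Prop :=
  parikh x p + parikh x (p + 2 * m) = 2 • parikh x (p + m)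

theorem isAbelianSquareAt_one : IsAbelianSquareAt x p 1 ↔ x p = x (p + 1) := by
  rw [IsAbelianSquareAt, mul_one, parikh_succ x (p + 1), parikh_succ, two_nsmul,
    Multiset.add_cons, Multiset.add_cons, Multiset.cons_add, Multiset.add_cons,
    Multiset.cons_inj_left, eq_comm]

theorem IsAbelianSquareAt.sum_add_sum [AddCommMonoid M] (h : IsAbelianSquareAt x p m) (v : α → M) :
    ∑ s ∈ range p, v (x s) + ∑ s ∈ range (p + 2 * m), v (x s) =
      2 • ∑ s ∈ range (p + m), v (x s) := by
  simpa only [Multiset.map_add, Multiset.map_nsmul, Multiset.sum_add, Multiset.sum_nsmul,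
    sum_map_parikh] using congrArg (fun P => (P.map v).sum) h

/-- The infinite word `x` contains no abelian square of period less than `L`. -/
def AvoidsAbelianSquaresBelow (x : ℕ → α) (L : ℕ) : Prop :=
  ∀ p m, 0 < m → m < L → ¬IsAbelianSquareAt x p m

theorem avoidsAbelianSquaresBelow_of_two_mul_le (hx : Periodic x L)
    (h : ∀ p m, 0 < m → 2 * m ≤ L → ¬IsAbelianSquareAt x p m) :
    AvoidsAbelianSquaresBelow x L := by
  intro p m hm hmL hsq
  by_cases hhalf : 2 * m ≤ L
  · exact h p m hm hhalf hsq
  -- The complement of an abelian square of period `m` in two turns around the circle is an abelian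
  -- square of period `L - m`.
  refine h (p + 2 * m) (L - m) (by omega) (by omega) ?_
  have hend : p + 2 * m + 2 * (L - m) = p + L + L := by omega
  have hmid : p + 2 * m + (L - m) = p + m + L := by omega
  rw [IsAbelianSquareAt] at hsq
  rw [IsAbelianSquareAt, hend, hmid, parikh_add_period hx, parikh_add_period hx,
    parikh_add_period hx, nsmul_add, ← hsq]
  abel

theorem avoidsAbelianCyc_two_of_periodic (hx : Periodic x L) (h : AvoidsAbelianSquaresBelow x L) :
    AvoidsAbelianCyc 2 ((List.range L).map x) := by
  rintro m u ⟨hm, f, rfl, hlen, hperm⟩ ⟨k, s, t, hst⟩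
  by_contra! hmL
  rw [List.length_map, List.length_range] at hmL
  refine h s.length m hm hmL ?_
  simp only [flatten_replicate_map_range hx, List.ofFn_succ, List.ofFn_zero, List.flatten_cons,
    List.flatten_nil, List.append_nil, Fin.succ_zero_eq_one] at hst
  have h₀ := coe_eq_parikh_of_append_eq (s := s) (t := f 0 ++ f 1 ++ t) (by simpa using hst)
  have h₁ := coe_eq_parikh_of_append_eq (s := s ++ f 0) (t := f 1 ++ t) (by simpa using hst)
  have h₂ := coe_eq_parikh_of_append_eq (s := s ++ f 0 ++ f 1) (t := t) (by simpa using hst)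
  have hparikh : (f 0 : Multiset α) = f 1 := Multiset.coe_eq_coe.2 (hperm 0 1)
  simp only [List.length_append, hlen, ← Multiset.coe_add] at h₁ h₂
  rw [IsAbelianSquareAt, two_mul, ← add_assoc, ← h₀, ← h₁, ← h₂, hparikh]
  abel

end InfiniteWords

section UniformImage

open Finset Function

variable {α β M : Type*} {k : ℕ} {x : ℕ → α}

/-- The image of the infinite word `x` under the `k`-uniform morphism sending the letter `a` to the
word `g a 0, …, g a (k - 1)`. -/
def uniformImage (k : ℕ) (g : α → ℕ → β) (x : ℕ → α) (n : ℕ) : β :=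
  g (x (n / k)) (n % k)

theorem periodic_uniformImage {L : ℕ} (hx : Periodic x L) (g : α → ℕ → β) :
    Periodic (uniformImage k g x) (k * L) := by
  intro n
  rcases k.eq_zero_or_pos with rfl | hk
  · rw [zero_mul, add_zero]
  · rw [uniformImage, uniformImage, Nat.add_mul_div_left _ _ hk, Nat.add_mul_mod_self_left, hx]

theorem sum_range_uniformImage_mul_add [AddCommMonoid M] {r : ℕ} (hr : r ≤ k) (g : α → ℕ → β)
    (x : ℕ → α) (v : β → M) (q : ℕ) :
    ∑ s ∈ range (k * q + r), v (uniformImage k g x s) =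
      ∑ s ∈ range (k * q), v (uniformImage k g x s) + ∑ s ∈ range r, v (g (x q) s) := by
  rw [sum_range_add]
  congr 1
  refine sum_congr rfl fun s hs => ?_
  have hsk : s < k := (mem_range.1 hs).trans_le hr
  rw [uniformImage, Nat.mul_add_div (by omega), Nat.div_eq_of_lt hsk, add_zero,
    Nat.mul_add_mod, Nat.mod_eq_of_lt hsk]

theorem sum_range_uniformImage_mul [AddCommMonoid M] (g : α → ℕ → β) (x : ℕ → α) (v : β → M)
    (q : ℕ) :
    ∑ s ∈ range (k * q), v (uniformImage k g x s) =
      ∑ j ∈ range q, ∑ s ∈ range k, v (g (x j) s) := by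
  induction q with
  | zero => simp only [mul_zero, range_zero, sum_empty]
  | succ q ih => rw [Nat.mul_succ, sum_range_uniformImage_mul_add le_rfl, ih, sum_range_succ]

end UniformImage

namespace Keranen

open Finset Function

/-- The image of the letter `0` under the `85`-uniform Keränen morphism on four letters, which sends
the letter `b` to `b + word`. -/
def word : List (Fin 4) :=
  [0, 1, 2, 0, 2, 3, 2, 1, 2, 3, 2, 0, 3, 2, 3, 1, 3, 0, 1, 0, 2, 0, 1, 0, 3, 1, 0, 1, 2,
    1, 3, 1, 2, 1, 0, 2, 1, 2, 3, 2, 0, 2, 1, 0, 1, 3, 0, 1, 0, 2, 0, 3, 2, 1, 2, 3, 2, 0,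
    2, 3, 1, 2, 1, 0, 2, 1, 2, 3, 2, 0, 2, 3, 2, 1, 3, 2, 3, 0, 3, 1, 3, 2, 1, 2, 0]

/-- The image of the infinite word `x` under the Keränen morphism. -/
def image (x : ℕ → Fin 4) : ℕ → Fin 4 :=
  uniformImage 85 (fun b s => b + word.getD s 0) x

/-- Letter weights that read off the letters of `x` from `image x`: the total weight of the image of
the letter `b` is `5 * 43435`, plus `43435` if `b = 0`. Here `43435` is the determinant of the
incidence matrix of the morphism and `weight` is a column of its adjugate, plus `2555 = 5 * 511` to
make the entries natural numbers. -/
def weight : Fin 4 → ℕ := ![1854, 2024, 6614, 239]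

/-- The partial sums of the weights of the four blocks `b + word`, as the digits of a single numeral
in base `2 ^ 20`: the kernel looks up a digit of a numeral much faster than an entry of a list. -/
def packedPotential : ℕ :=
  Nat.ofDigits 1048576 <| (List.finRange 4).flatMap fun b =>
    (word.map fun c => weight (b + c)).scanl (· + ·) 0

/-- The weight of the prefix of length `r ≤ 85` of the image of the letter `b`. -/
def potential (b : Fin 4) (r : ℕ) : ℕ :=
  packedPotential >>> (20 * (86 * b + r)) % 1048576

theorem potential_eq_sum : ∀ b : Fin 4, ∀ r < 86,
    potential b r = ∑ s ∈ range r, weight (b + word.getD s 0) := by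
  decide +kernel

theorem potential_le : ∀ b : Fin 4, ∀ r < 86, potential b r ≤ 10 * 43435 := by
  decide +kernel

theorem potential_block : ∀ b : Fin 4, potential b 85 = 43435 * ((if b = 0 then 1 else 0) + 5) := by
  decide +kernel

/-- The bit mask of the residues modulo `43435` of all potentials. -/
def residueMask : ℕ :=
  (List.finRange 4).foldr (fun b S => (List.range 85).foldr
    (fun r S => S ||| 1 <<< (potential b r % 43435)) S) 0

theorem testBit_residueMask : ∀ b : Fin 4, ∀ r < 85,
    residueMask.testBit (potential b r % 43435) := by
  decide +kernel

/-- The mask discards almost all `(r₁, r₀, b₀)` before the last letter `b₂` is tried. -/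
theorem exists_block_ends_of_testBit : ∀ r₁ < 85, ∀ r₀ < 85, ∀ b₀ : Fin 4,
    residueMask.testBit ((2 * potential 0 r₁ + 10 * 43435 - potential b₀ r₀) % 43435) →
    ∀ b₂ : Fin 4,
    potential b₀ r₀ + potential b₂ ((2 * r₁ + 85 - r₀) % 85) ≡ 2 * potential 0 r₁ [MOD 43435] →
    ∃ d₀ d₁ d₂ : Fin 2, ∀ i,
      potential (b₀ - i) r₀ + potential (b₂ - i) ((2 * r₁ + 85 - r₀) % 85) +
          2 * potential (0 - i) (85 * d₁) =
        2 * potential (0 - i) r₁ + potential (b₀ - i) (85 * d₀) + potential (b₂ - i) (85 * d₂) := by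
  decide +kernel

/-- The weight of the prefix of length `s < 170` of the image of the two-letter word `0 b`. -/
def pairPotential (b : Fin 4) (s : ℕ) : ℕ :=
  if s < 85 then potential 0 s else potential 0 85 + potential b (s - 85)

theorem pairPotential_add_ne : ∀ b : Fin 4, b ≠ 0 → ∀ p < 85, ∀ m < 85, 0 < m → p + 2 * m < 170 →
    pairPotential b p + pairPotential b (p + 2 * m) ≠ 2 * pairPotential b (p + m) := by
  decide +kernel

/-- Three cuts, at positions `rⱼ` of the images of the letters `bⱼ`, are moved to the start
(`dⱼ = 0`) or the end (`dⱼ = 1`) of their blocks: the congruences forced by an abelian square ensure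
that this can be done with the same `dⱼ` for all shifts `i` of the weight. -/
theorem exists_block_ends {b₀ b₁ b₂ : Fin 4} {r₀ r₁ r₂ : ℕ} (hr₀ : r₀ < 85) (hr₁ : r₁ < 85)
    (hr₂ : r₂ < 85) (hr : r₀ + r₂ ≡ 2 * r₁ [MOD 85])
    (hpot : potential (b₀ - b₁) r₀ + potential (b₂ - b₁) r₂ ≡ 2 * potential 0 r₁ [MOD 43435]) :
    ∃ d₀ d₁ d₂ : Fin 2, ∀ i,
      potential (b₀ - i) r₀ + potential (b₂ - i) r₂ + 2 * potential (b₁ - i) (85 * d₁) =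
        2 * potential (b₁ - i) r₁ + potential (b₀ - i) (85 * d₀) +
          potential (b₂ - i) (85 * d₂) := by
  obtain rfl : r₂ = (2 * r₁ + 85 - r₀) % 85 := by
    rw [Nat.ModEq] at hr
    omega
  have hresidue : (2 * potential 0 r₁ + 10 * 43435 - potential (b₀ - b₁) r₀) % 43435 =
      potential (b₂ - b₁) ((2 * r₁ + 85 - r₀) % 85) % 43435 := by
    have hle := potential_le (b₀ - b₁) r₀ (by omega)
    rw [Nat.ModEq] at hpot
    omega
  obtain ⟨d₀, d₁, d₂, h⟩ := exists_block_ends_of_testBit r₁ hr₁ r₀ hr₀ (b₀ - b₁)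
    (by rw [hresidue]; exact testBit_residueMask _ _ hr₂) (b₂ - b₁) hpot
  refine ⟨d₀, d₁, d₂, fun i => ?_⟩
  simpa only [sub_sub_sub_cancel_right, zero_sub, neg_sub] using h (i - b₁)

/-- The weight of the prefix of length `n` of `x`, with all letters lowered by `i`. -/
def height (x : ℕ → Fin 4) (i : Fin 4) (n : ℕ) : ℕ :=
  ∑ s ∈ range n, weight (x s - i)

variable {x : ℕ → Fin 4} {p m L : ℕ}

theorem height_add_height_of_isAbelianSquareAt (h : IsAbelianSquareAt x p m) (i : Fin 4) :
    height x i p + height x i (p + 2 * m) = 2 * height x i (p + m) :=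
  h.sum_add_sum fun a => weight (a - i)

theorem sum_weight_block (b i : Fin 4) {r : ℕ} (hr : r ≤ 85) :
    ∑ s ∈ range r, weight (b + word.getD s 0 - i) = potential (b - i) r := by
  rw [potential_eq_sum _ r (by omega)]
  simp only [add_sub_right_comm]

theorem height_image_mul_add (x : ℕ → Fin 4) (i : Fin 4) (q : ℕ) {r : ℕ} (hr : r ≤ 85) :
    height (image x) i (85 * q + r) = height (image x) i (85 * q) + potential (x q - i) r := by
  rw [height, image, sum_range_uniformImage_mul_add hr _ x (fun a => weight (a - i)),
    sum_weight_block _ _ hr]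
  rfl

theorem height_image_mul (x : ℕ → Fin 4) (i : Fin 4) (q : ℕ) :
    height (image x) i (85 * q) = 43435 * ((parikh x q).count i + 5 * q) := by
  induction q with
  | zero => rfl
  | succ q ih =>
    rw [Nat.mul_succ, height_image_mul_add x i q le_rfl, ih, potential_block, parikh_succ,
      Multiset.count_cons]
    simp only [sub_eq_zero, eq_comm]
    ring

theorem parikh_add_parikh_of_height_image {n₀ n₁ n₂ : ℕ}
    (h : ∀ i, height (image x) i (85 * n₀) + height (image x) i (85 * n₂) =
      2 * height (image x) i (85 * n₁)) :
    parikh x n₀ + parikh x n₂ = 2 • parikh x n₁ := by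
  simp only [height_image_mul] at h
  have hcard (n : ℕ) : ∑ i, (parikh x n).count i = n := by
    rw [Multiset.sum_count_eq_card fun i _ => mem_univ i, card_parikh]
  have hn : n₀ + n₂ = 2 * n₁ := by
    have h₀ := hcard n₀
    have h₁ := hcard n₁
    have h₂ := hcard n₂
    rw [Fin.sum_univ_four] at h₀ h₁ h₂
    have := h 0
    have := h 1
    have := h 2
    have := h 3
    omega
  ext i
  rw [Multiset.count_add, Multiset.count_nsmul]
  have := h i
  omega

theorem exists_parikh_add_parikh (h : IsAbelianSquareAt (image x) p m) :
    ∃ d₀ d₁ d₂ : Fin 2, parikh x (p / 85 + d₀) + parikh x ((p + 2 * m) / 85 + d₂) =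
      2 • parikh x ((p + m) / 85 + d₁) := by
  have hcut (i : Fin 4) (n : ℕ) : height (image x) i n =
      height (image x) i (85 * (n / 85)) + potential (x (n / 85) - i) (n % 85) := by
    conv_lhs => rw [← Nat.div_add_mod n 85]
    exact height_image_mul_add x i _ (Nat.mod_lt n (by norm_num)).le
  have hend (i : Fin 4) (q : ℕ) (d : Fin 2) : height (image x) i (85 * (q + d)) =
      height (image x) i (85 * q) + potential (x q - i) (85 * d) := by
    rw [mul_add, height_image_mul_add x i q (by omega)]
  have hsq (i : Fin 4) := height_add_height_of_isAbelianSquareAt h i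
  simp only [hcut _ p, hcut _ (p + m), hcut _ (p + 2 * m)] at hsq
  have hpot : potential (x (p / 85) - x ((p + m) / 85)) (p % 85) +
      potential (x ((p + 2 * m) / 85) - x ((p + m) / 85)) ((p + 2 * m) % 85) ≡
        2 * potential 0 ((p + m) % 85) [MOD 43435] := by
    have := hsq (x ((p + m) / 85))
    rw [sub_self] at this
    simp only [height_image_mul] at this
    rw [Nat.ModEq]
    omega
  obtain ⟨d₀, d₁, d₂, hd⟩ := exists_block_ends (b₁ := x ((p + m) / 85)) (Nat.mod_lt p (by norm_num))
    (Nat.mod_lt (p + m) (by norm_num)) (Nat.mod_lt (p + 2 * m) (by norm_num))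
    (by rw [Nat.ModEq]; omega) hpot
  refine ⟨d₀, d₁, d₂, parikh_add_parikh_of_height_image fun i => ?_⟩
  rw [hend, hend, hend]
  have := hsq i
  have := hd i
  omega

theorem height_image_pair (x : ℕ → Fin 4) (q : ℕ) {s : ℕ} (hs : s < 170) :
    height (image x) (x q) (85 * q + s) =
      height (image x) (x q) (85 * q) + pairPotential (x (q + 1) - x q) s := by
  rw [pairPotential]
  split_ifs with h
  · rw [height_image_mul_add x _ q h.le, sub_self]
  · have hsplit : 85 * q + s = 85 * (q + 1) + (s - 85) := by omega
    rw [hsplit, height_image_mul_add x _ (q + 1) (by omega), Nat.mul_succ,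
      height_image_mul_add x _ q le_rfl, sub_self, add_assoc]

theorem not_isAbelianSquareAt_image_of_div_le (hx : ∀ n, x n ≠ x (n + 1)) (hm : 0 < m)
    (hpm : (p + 2 * m) / 85 ≤ p / 85 + 1) : ¬IsAbelianSquareAt (image x) p m := by
  intro h
  set q := p / 85
  obtain ⟨r, hr⟩ : ∃ r, p = 85 * q + r := ⟨p % 85, (Nat.div_add_mod p 85).symm⟩
  have hsq := height_add_height_of_isAbelianSquareAt h (x q)
  rw [hr, add_assoc, add_assoc, height_image_pair x q (by omega), height_image_pair x q (by omega),
    height_image_pair x q (by omega)] at hsq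
  exact pairPotential_add_ne (x (q + 1) - x q) (sub_ne_zero.2 (hx q).symm) r (by omega) m (by omega)
    hm (by omega) (by omega)

theorem avoidsAbelianSquaresBelow_image (hL : 3 ≤ L) (hx : Periodic x L)
    (h : AvoidsAbelianSquaresBelow x L) : AvoidsAbelianSquaresBelow (image x) (85 * L) := by
  refine avoidsAbelianSquaresBelow_of_two_mul_le (periodic_uniformImage hx _) ?_
  intro p m hm hmL hsq
  obtain ⟨d₀, d₁, d₂, hd⟩ := exists_parikh_add_parikh hsq
  have hlen : p / 85 + d₀ + ((p + 2 * m) / 85 + d₂) = 2 * ((p + m) / 85 + d₁) := by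
    simpa only [Multiset.card_add, Multiset.card_nsmul, card_parikh, smul_eq_mul] using
      congrArg Multiset.card hd
  by_cases hzero : p / 85 + d₀ = (p + m) / 85 + (d₁ : ℕ)
  · have hne (n : ℕ) : x n ≠ x (n + 1) := fun hn =>
      h n 1 one_pos (by omega) (isAbelianSquareAt_one.2 hn)
    exact not_isAbelianSquareAt_image_of_div_le hne hm (by omega) hsq
  · obtain ⟨k, hk⟩ : ∃ k, (p + m) / 85 + (d₁ : ℕ) = p / 85 + d₀ + k :=
      ⟨(p + m) / 85 + d₁ - (p / 85 + d₀), by omega⟩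
    have hend : (p + 2 * m) / 85 + (d₂ : ℕ) = p / 85 + d₀ + 2 * k := by omega
    rw [hk, hend] at hd
    exact h _ k (by omega) (by omega) hd

theorem exists_periodic_avoidsAbelianSquaresBelow (n : ℕ) : ∃ x : ℕ → Fin 4,
    Periodic x (3 * 85 ^ n) ∧ AvoidsAbelianSquaresBelow x (3 * 85 ^ n) := by
  induction n with
  | zero =>
    have hx : Periodic (fun n => Fin.ofNat 4 (n % 3)) 3 := fun n => by
      simp only [Nat.add_mod_right]
    refine ⟨_, hx, avoidsAbelianSquaresBelow_of_two_mul_le hx fun p m hm hm3 hsq => ?_⟩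
    obtain rfl : m = 1 := by omega
    have := congrArg Fin.val (isAbelianSquareAt_one.1 hsq)
    simp only [Fin.ofNat] at this
    omega
  | succ n ih =>
    obtain ⟨x, hper, hx⟩ := ih
    have hL : 3 * 85 ^ (n + 1) = 85 * (3 * 85 ^ n) := by ring
    have h3 : 3 ≤ 3 * 85 ^ n := Nat.le_mul_of_pos_right 3 (by positivity)
    rw [hL]
    exact ⟨image x, periodic_uniformImage hper _, avoidsAbelianSquaresBelow_image h3 hper hx⟩

end Keranen

theorem arbitrarily_long_quaternary_avoid_abelian_squares_cyclically :
    ∀ n : ℕ, 0 < n → ∃ w : List (Fin 4), n ≤ w.length ∧ AvoidsAbelianCyc 2 w := by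
  intro n _
  obtain ⟨x, hper, hx⟩ := Keranen.exists_periodic_avoidsAbelianSquaresBelow n
  refine ⟨(List.range (3 * 85 ^ n)).map x, ?_, avoidsAbelianCyc_two_of_periodic hper hx⟩
  have hn : n < 85 ^ n := Nat.lt_pow_self (by norm_num)
  rw [List.length_map, List.length_range]
  omega
end

section
/- A nonempty word w avoids abelian |w|-powers cyclically if and only if for each positive integer k < |w|, the word w^k is not conjugate to an abelian power whose period is less than |w|. -/
/-- Two words are conjugate if one is a rotation of the other. -/
def Conjugate {α : Type*} (u v : List α) : Prop :=
  ∃ x y : List α, u = x ++ y ∧ v = y ++ x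

/-!
If an abelian power `v` is conjugate to a power of `w`, then the powers of `v` are abelian powers
of the same period, they occur in `w^ω`, and they have arbitrarily many blocks; keep the first
`|w|` blocks of one of them. Conversely, an abelian `|w|`-power of period `m` has length `m * |w|`,
and rotating `w` to the position where a factor of `w^ω` of that length starts shows that the
factor is conjugate to `w^m`. Hence `k = m` works.
-/

section Powers

variable {α : Type*}

theorem append_flatten_replicate_append (x y : List α) (n : ℕ) :
    x ++ (List.replicate n (y ++ x)).flatten = (List.replicate n (x ++ y)).flatten ++ x := by
  induction n with
  | zero => simp
  | succ n ih =>
    calc x ++ (List.replicate (n + 1) (y ++ x)).flatten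
        = x ++ y ++ (x ++ (List.replicate n (y ++ x)).flatten) := by
          simp [List.replicate_succ]
      _ = (List.replicate (n + 1) (x ++ y)).flatten ++ x := by
          simp [ih, List.replicate_succ]

theorem flatten_replicate_append_rotate_length (x y : List α) (n : ℕ) :
    (List.replicate n (x ++ y)).flatten.rotate x.length =
      (List.replicate n (y ++ x)).flatten := by
  cases n with
  | zero => simp
  | succ n =>
    calc (List.replicate (n + 1) (x ++ y)).flatten.rotate x.length
        = (x ++ (y ++ (List.replicate n (x ++ y)).flatten)).rotate x.length := by
          simp [List.replicate_succ]
      _ = y ++ (List.replicate n (x ++ y)).flatten ++ x := List.rotate_append_length_eq _ _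
      _ = (List.replicate (n + 1) (y ++ x)).flatten := by
          simp [List.replicate_succ, ← append_flatten_replicate_append]

theorem flatten_replicate_rotate (w : List α) (n i : ℕ) :
    (List.replicate n w).flatten.rotate i = (List.replicate n (w.rotate i)).flatten := by
  induction i generalizing w with
  | zero => simp
  | succ i ih =>
    cases w with
    | nil => simp
    | cons a l =>
      calc (List.replicate n (a :: l)).flatten.rotate (i + 1)
          = ((List.replicate n ([a] ++ l)).flatten.rotate [a].length).rotate i := by
            simp [List.rotate_rotate, Nat.add_comm]
        _ = (List.replicate n ((a :: l).rotate (i + 1))).flatten := by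
            rw [flatten_replicate_append_rotate_length, ih, List.rotate_cons_succ]

theorem eq_flatten_replicate_of_isPrefix {w u : List α} {k K : ℕ}
    (hu : u <+: (List.replicate K w).flatten) (hlen : u.length = k * w.length) :
    u = (List.replicate k w).flatten := by
  have flatten_add (i j : ℕ) : (List.replicate (i + j) w).flatten =
      (List.replicate i w).flatten ++ (List.replicate j w).flatten := by
    rw [← List.replicate_append_replicate, List.flatten_append]
  have hu' : u <+: (List.replicate (k + K) w).flatten := by
    rw [Nat.add_comm, flatten_add]
    exact hu.trans (List.prefix_append _ _)
  have hk : (List.replicate k w).flatten <+: (List.replicate (k + K) w).flatten := by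
    rw [flatten_add]
    exact List.prefix_append _ _
  have hlen' : u.length = (List.replicate k w).flatten.length := by simpa using hlen
  exact (List.prefix_of_prefix_length_le hu' hk hlen'.le).eq_of_length hlen'

end Powers

section Conjugacy

variable {α : Type*} {u v w : List α}

theorem conjugate_iff_isRotated : Conjugate u v ↔ u ~r v := by
  constructor
  · rintro ⟨x, y, rfl, rfl⟩
    exact List.isRotated_append
  · rintro ⟨i, rfl⟩
    exact ⟨_, _, (List.take_append_drop (i % u.length) u).symm,
      List.rotate_eq_drop_append_take_mod⟩

theorem Conjugate.flatten_replicate (h : Conjugate u v) (n : ℕ) :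
    Conjugate (List.replicate n u).flatten (List.replicate n v).flatten := by
  rw [conjugate_iff_isRotated] at h ⊢
  obtain ⟨i, rfl⟩ := h
  exact ⟨i, flatten_replicate_rotate u n i⟩

theorem Conjugate.occursCyc (h : Conjugate u v) : OccursCyc u v := by
  obtain ⟨x, y, rfl, rfl⟩ := h
  exact ⟨2, x, y, by simp [List.replicate_succ]⟩

theorem OccursCyc.of_isInfix (h : OccursCyc w u) (hv : v <:+: u) : OccursCyc w v :=
  h.imp fun _ hu => hv.trans hu

theorem OccursCyc.of_flatten_replicate {k : ℕ}
    (h : OccursCyc (List.replicate k w).flatten u) : OccursCyc w u := by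
  obtain ⟨n, hu⟩ := h
  refine ⟨n * k, ?_⟩
  rwa [← List.flatten_replicate_replicate, List.flatten_flatten, List.map_replicate]

theorem OccursCyc.conjugate_flatten_replicate {k : ℕ} (h : OccursCyc w u)
    (hlen : u.length = k * w.length) : Conjugate (List.replicate k w).flatten u := by
  obtain ⟨K, s, t, hK⟩ := h
  have hrot : (List.replicate K (w.rotate s.length)).flatten = u ++ (t ++ s) := by
    rw [← flatten_replicate_rotate, ← hK, List.append_assoc, List.rotate_append_length_eq,
      List.append_assoc]
  have hu : u = (List.replicate k (w.rotate s.length)).flatten :=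
    eq_flatten_replicate_of_isPrefix (hrot ▸ List.prefix_append _ _) (by simpa using hlen)
  rw [hu]
  exact (conjugate_iff_isRotated.mpr ⟨s.length, rfl⟩).flatten_replicate k

end Conjugacy

namespace IsAbelianPower

variable {α : Type*} {N m : ℕ} {u : List α}

theorem iff_exists_blocks : IsAbelianPower N m u ↔
    0 < m ∧ ∃ L : List (List α), L.length = N ∧ L.flatten = u ∧
      (∀ b ∈ L, b.length = m) ∧ ∀ b ∈ L, ∀ c ∈ L, b.Perm c := by
  refine and_congr_right fun _ => ⟨?_, ?_⟩
  · rintro ⟨f, rfl, hlen, hperm⟩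
    exact ⟨List.ofFn f, by simp, rfl, by simpa [List.mem_ofFn] using hlen,
      by simpa [List.mem_ofFn] using hperm⟩
  · rintro ⟨L, rfl, rfl, hlen, hperm⟩
    exact ⟨L.get, by rw [List.ofFn_get], fun i => hlen _ (L.get_mem i),
      fun i j => hperm _ (L.get_mem i) _ (L.get_mem j)⟩

theorem length_eq (h : IsAbelianPower N m u) : u.length = N * m := by
  obtain ⟨-, L, rfl, rfl, hlen, -⟩ := iff_exists_blocks.mp h
  rw [List.length_flatten, List.map_eq_replicate_iff.mpr hlen, List.sum_replicate, smul_eq_mul]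

theorem flatten_replicate (h : IsAbelianPower N m u) (n : ℕ) :
    IsAbelianPower (n * N) m (List.replicate n u).flatten := by
  obtain ⟨hm, L, rfl, rfl, hlen, hperm⟩ := iff_exists_blocks.mp h
  have mem_of_mem {b : List α} (hb : b ∈ (List.replicate n L).flatten) : b ∈ L := by
    obtain ⟨L', hL', hb⟩ := List.mem_flatten.mp hb
    rwa [List.eq_of_mem_replicate hL'] at hb
  exact iff_exists_blocks.mpr ⟨hm, (List.replicate n L).flatten, by simp,
    by rw [List.flatten_flatten, List.map_replicate],
    fun b hb => hlen b (mem_of_mem hb), fun b hb c hc => hperm b (mem_of_mem hb) c (mem_of_mem hc)⟩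

theorem exists_isPrefix {M : ℕ} (h : IsAbelianPower N m u) (hM : M ≤ N) :
    ∃ p, p <+: u ∧ IsAbelianPower M m p := by
  obtain ⟨hm, L, rfl, rfl, hlen, hperm⟩ := iff_exists_blocks.mp h
  have htake : (L.take M).flatten <+: L.flatten :=
    List.IsPrefix.flatten ⟨L.drop M, List.take_append_drop M L⟩
  exact ⟨_, htake, iff_exists_blocks.mpr ⟨hm, L.take M, List.length_take_of_le hM, rfl,
    fun b hb => hlen b (List.mem_of_mem_take hb),
    fun b hb c hc => hperm b (List.mem_of_mem_take hb) c (List.mem_of_mem_take hc)⟩⟩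

end IsAbelianPower

theorem avoidance_characterization {α : Type*} (w : List α) (hw : w ≠ []) :
    AvoidsAbelianCyc w.length w ↔
      ∀ k : ℕ, 0 < k → k < w.length →
        ¬ ∃ (N m : ℕ) (v : List α), 2 ≤ N ∧ m < w.length ∧
            IsAbelianPower N m v ∧ Conjugate ((List.replicate k w).flatten) v := by
  constructor
  · rintro havoid k - - ⟨N, m, v, hN, hm, hv, hconj⟩
    obtain ⟨p, hp_start, hp⟩ :=
      (hv.flatten_replicate w.length).exists_isPrefix (Nat.le_mul_of_pos_right _ (by omega))
    have hocc : OccursCyc w (List.replicate w.length v).flatten :=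
      (hconj.flatten_replicate w.length).occursCyc.of_flatten_replicate.of_flatten_replicate
    exact (havoid m p hp (hocc.of_isInfix hp_start.isInfix)).not_gt hm
  · intro hnot m u hu hocc
    by_contra! hm
    have hm_pos : 0 < m := hu.1
    have hlen : u.length = m * w.length := by rw [hu.length_eq, Nat.mul_comm]
    exact hnot m hm_pos hm
      ⟨w.length, m, u, by omega, hm, hu, hocc.conjugate_flatten_replicate hlen⟩
end

section
/- Let x be a nonempty word and N ≥ 2. If the infinite word x^ω contains an abelian N-power of period m with |x|/2 ≤ m < |x|, then x^ω contains an abelian N-power of period |x| − m. Moreover, if x^ω begins with an abelian N-power of period m with |x|/2 < m < |x|, then x^{N−1} ends with an abelian N-power of period |x| − m. -/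
/-!
The complement, in a full turn of the circular word `x`, of a block of length `m` is a block of
length `|x| - m`, and complements of abelian equivalent blocks are abelian equivalent. Let an
abelian `N`-power of period `m` end at position `p`. Modulo `|x|` the complements of its blocks,
taken in reverse order, start at `p`, `p - m`, `p - 2m`, ..., that is at `p`, `p + (|x| - m)`,
`p + 2(|x| - m)`, ..., so they are consecutive and form an abelian `N`-power starting at `p`.
This power and the given one make exactly `N` turns together, so the new one ends where the given
one starts; its length `N(|x| - m)` is at most `(N - 1)|x|` as soon as `|x| ≤ N m`.
-/

section FactorAt

variable {R α : Type*} [AddMonoidWithOne R]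

/-- The factor of length `l` at position `a` of a word `g` whose letters are indexed by `R`: an
infinite word for `R = ℕ`, a circular word of length `n` for `R = ZMod n`. -/
def factorAt (g : R → α) (a : R) (l : ℕ) : List α :=
  List.ofFn fun i : Fin l => g (a + (i : ℕ))

@[simp]
theorem length_factorAt (g : R → α) (a : R) (l : ℕ) : (factorAt g a l).length = l :=
  List.length_ofFn

theorem factorAt_one (g : R → α) (a : R) : factorAt g a 1 = [g a] := by
  simp [factorAt]

theorem factorAt_add (g : R → α) (a : R) (k l : ℕ) :
    factorAt g a (k + l) = factorAt g a k ++ factorAt g (a + k) l := by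
  simp [factorAt, List.ofFn_add, add_assoc]

theorem factorAt_mul (g : R → α) (a : R) (N m : ℕ) :
    factorAt g a (N * m) =
      (List.ofFn fun i : Fin N => factorAt g (a + (i * m : ℕ)) m).flatten := by
  simp only [factorAt, List.ofFn_mul, Nat.cast_add, add_assoc]

theorem eq_factorAt_of_append_append_eq {g : R → α} {a : R} {L : ℕ} {s u t : List α}
    (h : s ++ u ++ t = factorAt g a L) : u = factorAt g (a + s.length) u.length := by
  have hL : L = s.length + u.length + t.length := by
    simpa [add_assoc] using (congrArg List.length h).symm
  rw [hL, factorAt_add, factorAt_add] at h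
  have hsu := (List.append_inj h (by simp)).1
  exact (List.append_inj hsu (by simp)).2

theorem IsAbelianPower.length_eq_s12 {N m : ℕ} {u : List α} (h : IsAbelianPower N m u) :
    u.length = N * m := by
  obtain ⟨-, f, rfl, hlen, -⟩ := h
  simp [List.length_flatten, List.map_ofFn, Function.comp_def, hlen]

theorem isAbelianPower_factorAt_iff {g : R → α} {a : R} {N m : ℕ} :
    IsAbelianPower N m (factorAt g a (N * m)) ↔
      0 < m ∧ ∀ i j : Fin N,
        (factorAt g (a + (i * m : ℕ)) m).Perm (factorAt g (a + (j * m : ℕ)) m) := by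
  refine and_congr_right fun _ => ⟨?_, fun h => ⟨_, factorAt_mul g a N m, by simp, h⟩⟩
  rintro ⟨f, hf, hlen, hperm⟩
  rw [factorAt_mul] at hf
  have hblocks : (fun i : Fin N => factorAt g (a + (i * m : ℕ)) m) = f :=
    List.ofFn_injective <| List.eq_iff_flatten_eq.2
      ⟨hf, by simp [List.map_ofFn, Function.comp_def, hlen]⟩
  simpa only [← hblocks] using hperm

end FactorAt

section Circular

variable {α : Type*} {n : ℕ}

theorem factorAt_add_one_perm (g : ZMod n → α) (a : ZMod n) :
    (factorAt g (a + 1) n).Perm (factorAt g a n) := by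
  have hshift : g a :: factorAt g (a + 1) n = factorAt g a n ++ [g a] := by
    have h := factorAt_add g a 1 n
    rw [add_comm 1 n, factorAt_add] at h
    simpa [factorAt_one] using h.symm
  have hcons : (g a :: factorAt g (a + 1) n).Perm (g a :: factorAt g a n) :=
    hshift ▸ List.perm_append_singleton _ _
  exact hcons.cons_inv

theorem factorAt_perm (g : ZMod n → α) (a b : ZMod n) :
    (factorAt g a n).Perm (factorAt g b n) := by
  have hperiodic : Function.Periodic (fun c => (factorAt g c n : Multiset α)) 1 :=
    fun c => Multiset.coe_eq_coe.2 (factorAt_add_one_perm g c)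
  obtain ⟨k, hk⟩ := ZMod.intCast_surjective (a - b)
  simpa [hk] using hperiodic.int_mul k b

theorem factorAt_compl_perm {m d : ℕ} {g : ZMod (m + d) → α} {a b : ZMod (m + d)}
    (h : (factorAt g a m).Perm (factorAt g b m)) :
    (factorAt g (a + m) d).Perm (factorAt g (b + m) d) := by
  have hfull := factorAt_perm g a b
  rw [factorAt_add, factorAt_add] at hfull
  exact (List.perm_append_left_iff _).1 ((h.symm.append_right _).trans hfull)

theorem IsAbelianPower.compl {m N : ℕ} {g : ZMod n → α} {a : ZMod n} (hmn : m < n)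
    (h : IsAbelianPower N m (factorAt g a (N * m))) :
    IsAbelianPower N (n - m) (factorAt g (a + (N * m : ℕ)) (N * (n - m))) := by
  obtain ⟨d, rfl⟩ := Nat.exists_eq_add_of_le hmn.le
  rw [Nat.add_sub_cancel_left]
  have hpos (i : Fin N) :
      a + (N * m : ℕ) + (i * d : ℕ) = a + (i.rev * m : ℕ) + (m : ℕ) := by
    have hd : (d : ZMod (m + d)) = -m :=
      eq_neg_of_add_eq_zero_right (by exact_mod_cast ZMod.natCast_self (m + d))
    have hN : (N : ZMod (m + d)) = i.rev + i + 1 := by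
      have : N = i.rev + i + 1 := by grind
      exact_mod_cast congrArg (Nat.cast : ℕ → ZMod (m + d)) this
    push_cast
    rw [hd, hN]
    ring
  have hblocks := (isAbelianPower_factorAt_iff.1 h).2
  refine isAbelianPower_factorAt_iff.2 ⟨by lia, fun i j => ?_⟩
  rw [hpos, hpos]
  exact factorAt_compl_perm (hblocks i.rev j.rev)

end Circular

section CircularWord

variable {α : Type*}

/-- The circular word with the letters of `x`, which encodes the periodic word `x^ω`. -/
def circularWord (x : List α) [NeZero x.length] (a : ZMod x.length) : α :=
  x[a.val]'a.val_lt

variable (x : List α) [NeZero x.length]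

theorem factorAt_circularWord_zero : factorAt (circularWord x) 0 x.length = x := by
  refine List.ext_getElem (by simp) fun i _ hi => ?_
  simp [factorAt, circularWord, Nat.mod_eq_of_lt hi]

theorem flatten_replicate_eq_factorAt (k : ℕ) :
    (List.replicate k x).flatten = factorAt (circularWord x) 0 (k * x.length) := by
  simp [factorAt_mul, factorAt_circularWord_zero]

theorem occursCyc_factorAt (a : ZMod x.length) (l : ℕ) :
    OccursCyc x (factorAt (circularWord x) a l) := by
  have hlen : a.val + l ≤ (a.val + l) * x.length :=
    Nat.le_mul_of_pos_right _ (NeZero.pos x.length)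
  obtain ⟨r, hr⟩ := Nat.exists_eq_add_of_le hlen
  refine ⟨a.val + l, factorAt (circularWord x) 0 a.val,
    factorAt (circularWord x) (a.val + l : ℕ) r, ?_⟩
  simp [flatten_replicate_eq_factorAt, hr, factorAt_add]

variable {x}

theorem OccursCyc.exists_eq_factorAt {u : List α} (h : OccursCyc x u) :
    ∃ a, u = factorAt (circularWord x) a u.length := by
  obtain ⟨k, s, t, hst⟩ := h
  rw [flatten_replicate_eq_factorAt] at hst
  exact ⟨_, eq_factorAt_of_append_append_eq hst⟩

theorem eq_factorAt_zero_of_prefix_flatten_replicate {u : List α} {k : ℕ}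
    (h : u <+: (List.replicate k x).flatten) : u = factorAt (circularWord x) 0 u.length := by
  obtain ⟨t, ht⟩ := h
  rw [flatten_replicate_eq_factorAt] at ht
  simpa using eq_factorAt_of_append_append_eq (s := []) ht

theorem factorAt_suffix_flatten_replicate {l r k : ℕ} (h : l + r = k * x.length) :
    factorAt (circularWord x) l r <:+ (List.replicate k x).flatten := by
  rw [flatten_replicate_eq_factorAt, ← h, factorAt_add, zero_add]
  exact List.suffix_append _ _

end CircularWord

theorem exists_isAbelianPower_sub_occursCyc {α : Type*} {x : List α} {N m : ℕ}
    (hm : m < x.length) (h : ∃ u, IsAbelianPower N m u ∧ OccursCyc x u) :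
    ∃ v, IsAbelianPower N (x.length - m) v ∧ OccursCyc x v := by
  have : NeZero x.length := ⟨by lia⟩
  obtain ⟨u, hu, hxu⟩ := h
  obtain ⟨a, ha⟩ := hxu.exists_eq_factorAt
  rw [hu.length_eq_s12] at ha
  subst ha
  exact ⟨_, hu.compl hm, occursCyc_factorAt x _ _⟩

theorem exists_isAbelianPower_sub_suffix {α : Type*} {x : List α} {N m : ℕ}
    (hm : m < x.length) (hN : x.length ≤ N * m)
    (h : ∃ u, IsAbelianPower N m u ∧ ∃ k : ℕ, u <+: (List.replicate k x).flatten) :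
    ∃ v, IsAbelianPower N (x.length - m) v ∧ v <:+ (List.replicate (N - 1) x).flatten := by
  have : NeZero x.length := ⟨by lia⟩
  obtain ⟨u, hu, k, hk⟩ := h
  have hzero := eq_factorAt_zero_of_prefix_flatten_replicate hk
  rw [hu.length_eq_s12] at hzero
  subst hzero
  have hcompl := hu.compl hm
  have hstart : (0 + (N * m : ℕ) : ZMod x.length) = (N * m - x.length : ℕ) := by
    simp [Nat.cast_sub hN]
  rw [hstart] at hcompl
  refine ⟨_, hcompl, factorAt_suffix_flatten_replicate ?_⟩
  have hmul : N * m ≤ N * x.length := Nat.mul_le_mul_left N hm.le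
  rw [Nat.mul_sub, Nat.sub_one_mul]
  lia

theorem reduction_short_general {α : Type*} (x : List α) (N m : ℕ) (hm : m < x.length) :
    ((∃ u : List α, IsAbelianPower N m u ∧ OccursCyc x u) →
      ∃ v : List α, IsAbelianPower N (x.length - m) v ∧ OccursCyc x v) ∧
    ((x.length ≤ N * m ∧
        ∃ u : List α, IsAbelianPower N m u ∧ ∃ k : ℕ, u <+: (List.replicate k x).flatten) →
      ∃ v : List α, IsAbelianPower N (x.length - m) v ∧
        v <:+ (List.replicate (N - 1) x).flatten) :=
  ⟨exists_isAbelianPower_sub_occursCyc hm,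
    fun ⟨hN, h⟩ => exists_isAbelianPower_sub_suffix hm hN h⟩

theorem reduction_short {α : Type*} (x : List α) (hx : x ≠ []) (N : ℕ) (hN : 2 ≤ N)
    (m : ℕ) :
    ((x.length ≤ 2 * m ∧ m < x.length ∧
        ∃ u : List α, IsAbelianPower N m u ∧ OccursCyc x u) →
      ∃ v : List α, IsAbelianPower N (x.length - m) v ∧ OccursCyc x v) ∧
    ((x.length < 2 * m ∧ m < x.length ∧
        ∃ u : List α, IsAbelianPower N m u ∧ ∃ k : ℕ, u <+: (List.replicate k x).flatten) →
      ∃ v : List α, IsAbelianPower N (x.length - m) v ∧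
        v <:+ (List.replicate (N - 1) x).flatten) :=
  ⟨fun ⟨_, hm, hu⟩ => (reduction_short_general x N m hm).1 hu,
    fun ⟨hlt, hm, hu⟩ => (reduction_short_general x N m hm).2
      ⟨hlt.le.trans (Nat.mul_le_mul_right m hN), hu⟩⟩
end

section
/- Let x be a nonempty word and N ≥ 2. If the infinite word x^ω contains an (ordinary) N-power of period m with |x|/2 ≤ m < |x|, then x^ω contains an N-power of period |x| − m. -/
/-- `u` is an (ordinary) `N`-power of period `m`. -/
def IsPower {α : Type*} (N m : ℕ) (u : List α) : Prop :=
  0 < m ∧ ∃ v : List α, v.length = m ∧ u = (List.replicate N v).flatten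

/-!
Let `n = |x|`. An `N`-power of period `m` in `x^ω` says that `x^ω` agrees with its shift by `m`
along a window of length `(N - 1) * m`. Since `x^ω` also agrees with its shift by `n`, it agrees
with its shift by `n - m` along the same window moved right by `m`. For `n ≤ 2 * m` that window has
length at least `(N - 1) * (n - m)`, which is enough for an `N`-power of period `n - m`.
-/

/-- The infinite word `x^ω`, as the sequence of its letters indexed from `0`; its factor of length
`L` at position `a` is then the list `(List.range' a L).map (omegaPower x hx)`. -/
def omegaPower {α : Type*} (x : List α) (hx : x ≠ []) (i : ℕ) : α :=
  x[i % x.length]'(Nat.mod_lt _ (List.length_pos_of_ne_nil hx))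

section HasPeriod

variable {β : Type*} {f : ℕ → β}

theorem hasPeriod_map_range'_iff {a L p : ℕ} :
    ((List.range' a L).map f).HasPeriod p ↔ ∀ i, i + p < L → f (a + i + p) = f (a + i) := by
  simp only [List.hasPeriod_iff_getElem?, List.length_map, List.length_range',
    Nat.lt_sub_iff_add_lt]
  refine forall₂_congr fun i hi => ?_
  have hi' : i < L := by omega
  simp [hi, hi', eq_comm, Nat.add_assoc]

theorem hasPeriod_sub_map_range'_of_periodic {n m a L K : ℕ} (hf : Function.Periodic f n)
    (hmn : m ≤ n) (hKL : K ≤ L) (h : ((List.range' a (L + m)).map f).HasPeriod m) :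
    ((List.range' (a + m) (K + (n - m))).map f).HasPeriod (n - m) := by
  rw [hasPeriod_map_range'_iff] at h ⊢
  intro i hi
  calc f (a + m + i + (n - m)) = f (a + i + n) := by congr 1; omega
    _ = f (a + i) := hf _
    _ = f (a + i + m) := (h i (by omega)).symm
    _ = f (a + m + i) := by rw [Nat.add_right_comm]

end HasPeriod

section Words

variable {α : Type*} {x : List α}

theorem omegaPower_periodic (hx : x ≠ []) : Function.Periodic (omegaPower x hx) x.length := by
  intro i
  simp only [omegaPower, Nat.add_mod_right]

theorem flatten_replicate_eq_map_omegaPower (hx : x ≠ []) (k : ℕ) :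
    (List.replicate k x).flatten = (List.range' 0 (k * x.length)).map (omegaPower x hx) :=
  calc (List.replicate k x).flatten = List.ofFn (Fin.repeat k x.get) := by
        rw [List.ofFn_fin_repeat, List.ofFn_get]
    _ = (List.range' 0 (k * x.length)).map (omegaPower x hx) := by
        rw [List.ofFn_eq_map]
        refine List.ext_getElem (by simp) fun i _ _ => ?_
        simp [omegaPower, Fin.repeat, Fin.modNat]

theorem occursCyc_iff_exists_map_range' (hx : x ≠ []) {u : List α} :
    OccursCyc x u ↔ ∃ a L, u = (List.range' a L).map (omegaPower x hx) := by
  simp only [OccursCyc, flatten_replicate_eq_map_omegaPower hx]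
  constructor
  · rintro ⟨k, s, t, hst⟩
    obtain ⟨_, _, hsplit, hsu, -⟩ := List.map_eq_append_iff.1 hst.symm
    obtain ⟨_, _, rfl, -, rfl⟩ := List.map_eq_append_iff.1 hsu
    obtain ⟨_, -, hprefix, -⟩ := List.range'_eq_append_iff.1 hsplit
    obtain ⟨_, -, -, rfl⟩ := List.range'_eq_append_iff.1 hprefix.symm
    exact ⟨_, _, rfl⟩
  · rintro ⟨a, L, rfl⟩
    obtain ⟨r, hr⟩ : ∃ r, (a + L) * x.length = a + L + r :=
      Nat.exists_eq_add_of_le (Nat.le_mul_of_pos_right _ (List.length_pos_of_ne_nil hx))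
    refine ⟨a + L, List.IsInfix.map _ ⟨List.range' 0 a, List.range' (a + L) r, ?_⟩⟩
    simp only [hr, ← List.range'_append_1, Nat.zero_add]

theorem hasPeriod_flatten_replicate (x : List α) (k : ℕ) :
    (List.replicate k x).flatten.HasPeriod x.length := by
  obtain rfl | hx := eq_or_ne x []
  · simp
  rw [flatten_replicate_eq_map_omegaPower hx, hasPeriod_map_range'_iff]
  exact fun i _ => omegaPower_periodic hx _

theorem eq_of_hasPeriod_of_take_eq {p : ℕ} {u v : List α} (hp : 0 < p)
    (hlen : u.length = v.length) (hu : u.HasPeriod p) (hv : v.HasPeriod p)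
    (h : u.take p = v.take p) : u = v := by
  refine List.ext_getElem? fun i => ?_
  by_cases hi : i < u.length
  · have hip : i % p < p := Nat.mod_lt i hp
    rw [← hu.getElem?_mod p i u hi, ← hv.getElem?_mod p i v (hlen ▸ hi),
      ← List.getElem?_take_of_lt hip, h, List.getElem?_take_of_lt hip]
  · rw [List.getElem?_eq_none (by omega), List.getElem?_eq_none (by omega)]

theorem isPower_succ_iff_hasPeriod {N m : ℕ} {u : List α} :
    IsPower (N + 1) m u ↔ 0 < m ∧ u.length = (N + 1) * m ∧ u.HasPeriod m := by
  refine and_congr_right fun hm => ⟨?_, ?_⟩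
  · rintro ⟨v, rfl, rfl⟩
    exact ⟨by simp, hasPeriod_flatten_replicate v _⟩
  · rintro ⟨hlen, hper⟩
    have hv : (u.take m).length = m := by
      simpa [hlen] using Nat.le_mul_of_pos_left m N.succ_pos
    refine ⟨u.take m, hv, eq_of_hasPeriod_of_take_eq hm ?_ hper ?_ ?_⟩
    · simp [hlen, hv]
    · have hpow := hasPeriod_flatten_replicate (u.take m) (N + 1)
      rwa [hv] at hpow
    · rw [List.replicate_succ, List.flatten_cons, List.take_left' hv]

end Words

theorem ordinary_reduction_short_general {α : Type*} {x : List α} {m N M : ℕ}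
    (hm : m < x.length) (hMN : M * (x.length - m) ≤ N * m)
    (h : ∃ u : List α, IsPower (N + 1) m u ∧ OccursCyc x u) :
    ∃ v : List α, IsPower (M + 1) (x.length - m) v ∧ OccursCyc x v := by
  have hx : x ≠ [] := List.length_pos_iff.1 (Nat.zero_lt_of_lt hm)
  obtain ⟨u, hpow, hocc⟩ := h
  obtain ⟨a, L, rfl⟩ := (occursCyc_iff_exists_map_range' hx).1 hocc
  obtain ⟨-, hL, hper⟩ := isPower_succ_iff_hasPeriod.1 hpow
  obtain rfl : L = N * m + m := by simpa [Nat.succ_mul] using hL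
  refine ⟨_, isPower_succ_iff_hasPeriod.2 ⟨Nat.sub_pos_of_lt hm, ?_,
    hasPeriod_sub_map_range'_of_periodic (omegaPower_periodic hx) hm.le hMN hper⟩,
    (occursCyc_iff_exists_map_range' hx).2 ⟨_, _, rfl⟩⟩
  simp [Nat.succ_mul]

theorem ordinary_reduction_short {α : Type*} (x : List α) (hx : x ≠ [])
    (N : ℕ) (hN : 2 ≤ N) (m : ℕ)
    (hm₁ : x.length ≤ 2 * m) (hm₂ : m < x.length)
    (h : ∃ u : List α, IsPower N m u ∧ OccursCyc x u) :
    ∃ v : List α, IsPower N (x.length - m) v ∧ OccursCyc x v := by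
  obtain ⟨K, rfl⟩ := Nat.exists_eq_add_of_le' hN
  exact ordinary_reduction_short_general hm₂ (Nat.mul_le_mul_left (K + 1) (by omega)) h
end

section
/- If n is a positive integer with n ∉ {5, 7, 9, 10, 14, 17}, then there exists a word of length n over a 3-letter alphabet that avoids 2-powers cyclically. -/
/-- `w` avoids `N`-powers cyclically. -/
def AvoidsPowerCyc {α : Type*} (N : ℕ) (w : List α) : Prop :=
  ∀ m u, IsPower N m u → OccursCyc w u → w.length ≤ m


/-!
A marked substitution replaces each letter by one of several blocks. Every block starts with a
marker that occurs nowhere else, so the cuts between blocks are recognisable in any factor of a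
product of blocks. If two consecutive blocks come from different letters, they contain no square;
hence a square in a product of blocks covers a cut in its first half, and moving that cut by the
period gives another cut. Blocks between the two cuts are repeated exactly, and the block around the
centre of the square is half covered, which is enough to recognise its letter or that of the first
block. So the square comes from a square of letters, and the image of a word that avoids squares
cyclically avoids squares cyclically.

For a suitable substitution on three letters there is enough choice of block lengths that the
images of a word of length `k` have every length from `19 * k` to `28 * k`. All long words are
therefore obtained by induction from finitely many short ones.
-/

section Factor

variable {α : Type*} {x : Stream' α} {i j m n p r s y : ℕ} {u : List α}

/-- The factor of length `r` starting at position `i` of the infinite word `x`. -/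
def factor (x : Stream' α) (i r : ℕ) : List α := (x.drop i).take r

@[simp]
theorem length_factor : (factor x i r).length = r := Stream'.length_take _ _

theorem factor_add : factor x i (m + n) = factor x i m ++ factor x (i + m) n := by
  rw [factor, Stream'.take_add, Stream'.drop_drop, factor, factor]

theorem take_factor (h : m ≤ r) : (factor x i r).take m = factor x i m := by
  rw [factor, Stream'.take_take, min_eq_right h, factor]

theorem drop_factor (h : m ≤ r) : (factor x i r).drop m = factor x (i + m) (r - m) := by
  rw [← Nat.add_sub_of_le h, factor_add, List.drop_left' length_factor, Nat.add_sub_cancel_left]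

theorem factor_isPrefix_factor (h : m ≤ n) : factor x i m <+: factor x i n := by
  rw [← take_factor h]
  exact List.take_prefix _ _

theorem factor_isInfix_factor (hi : i ≤ j) (hr : j + r ≤ i + n) :
    factor x j r <:+: factor x i n := by
  rw [show n = (j - i) + r + (i + n - (j + r)) by omega, factor_add, factor_add,
    Nat.add_sub_of_le hi]
  exact List.infix_append _ _ _

theorem exists_factor_eq_of_isInfix_take (h : u <:+: x.take n) :
    ∃ i, factor x i u.length = u := by
  obtain ⟨v, t, h⟩ := h
  have hn : n = v.length + u.length + t.length := by
    simpa [add_assoc] using (congrArg List.length h).symm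
  have hvut : factor x 0 v.length ++ factor x v.length u.length ++
      factor x (v.length + u.length) t.length = v ++ u ++ t := by
    rw [h, hn, ← Stream'.drop_zero (s := x), ← factor, factor_add, factor_add]
    simp only [Stream'.drop_zero, zero_add]
  have hvu := (List.append_inj hvut (by simp)).1
  exact ⟨v.length, (List.append_inj hvu (by simp)).2⟩

theorem factor_eq_factor_iff :
    factor x i r = factor x j r ↔ ∀ t < r, x.get (i + t) = x.get (j + t) := by
  have get_factor (i t : ℕ) (ht : t < r) : (factor x i r)[t]? = some (x.get (i + t)) := by
    rw [factor, Stream'.getElem?_take ht, Stream'.get_drop]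
  constructor
  · intro h t ht
    simpa [get_factor _ _ ht] using congrArg (·[t]?) h
  · intro h
    refine List.ext_getElem? fun t => ?_
    rcases lt_or_ge t r with ht | ht
    · rw [get_factor _ _ ht, get_factor _ _ ht, h t ht]
    · simp [ht]

/-- A square of period `p` starts at position `s` of the infinite word `x`. -/
def HasSquareAt (x : Stream' α) (s p : ℕ) : Prop :=
  0 < p ∧ factor x s p = factor x (s + p) p

theorem HasSquareAt.factor_eq (h : HasSquareAt x s p) (hy : s ≤ y) (hr : y + r ≤ s + p) :
    factor x y r = factor x (y + p) r := by
  have hdrop : ((factor x s p).drop (y - s)).take r =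
      ((factor x (s + p) p).drop (y - s)).take r := by
    rw [h.2]
  rwa [drop_factor (by omega), drop_factor (by omega), take_factor (by omega),
    take_factor (by omega), Nat.add_right_comm, Nat.add_sub_of_le hy] at hdrop

end Factor

/-- A finite word none of whose factors is a nonempty square `uu`. -/
def SquareFreeWord {α : Type*} (l : List α) : Prop :=
  ∀ u, u ++ u <:+: l → u = []

/-- A letter-to-words substitution (each letter `c` may be replaced by any block in `σ c`) whose
blocks can be recognised inside a product of blocks: they start with a marker `M`, and `M` occurs
in a product of blocks only where a block starts. Any `h` letters at the start or at the end of a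
block determine the letter it came from. -/
structure IsMarkedSubstitution {α β : Type*} (σ : β → Set (List α)) (M : List α) (h : ℕ) :
    Prop where
  marker_ne_nil : M ≠ []
  marker_isPrefix {c A} : A ∈ σ c → M <+: A
  not_marker_isPrefix_drop {c A k} : A ∈ σ c → 0 < k → k < A.length → ¬ M <+: (A ++ M).drop k
  two_mul_le_length {c A} : A ∈ σ c → 2 * h ≤ A.length
  eq_of_take_eq {c d A B} : A ∈ σ c → B ∈ σ d → A.take h = B.take h → c = d
  eq_of_rtake_eq {c d A B} : A ∈ σ c → B ∈ σ d → A.rtake h = B.rtake h → c = d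
  eq_of_isPrefix {c d A B} : A ∈ σ c → B ∈ σ d → A <+: B → A = B
  squareFreeWord {c d A B} : c ≠ d → A ∈ σ c → B ∈ σ d → SquareFreeWord (A ++ B ++ M)

/-- The infinite word `x` is a product of blocks, the `i`-th of which comes from the letter
`a.get i` and occupies the positions from `b i` to `b (i + 1)`. -/
structure IsParsing {α β : Type*} (σ : β → Set (List α)) (x : Stream' α) (a : Stream' β)
    (b : ℕ → ℕ) : Prop where
  zero : b 0 = 0
  strictMono : StrictMono b
  block_mem (i : ℕ) : factor x (b i) (b (i + 1) - b i) ∈ σ (a.get i)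

namespace IsParsing

variable {α β : Type*} {σ : β → Set (List α)} {M : List α} {h : ℕ} {x : Stream' α}
  {a : Stream' β} {b : ℕ → ℕ} {i j k m p r s y : ℕ}

section

variable (hx : IsParsing σ x a b)

include hx

theorem cut_lt (i : ℕ) : b i < b (i + 1) := hx.strictMono i.lt_succ_self

theorem exists_cut_le_lt (y : ℕ) : ∃ i, b i ≤ y ∧ y < b (i + 1) := by
  have hcover := iUnion_Ico_map_succ_eq_Ici (fun i => hx.strictMono.monotone bot_le)
    hx.strictMono.not_bddAbove_range_of_wellFoundedLT
  have hy : y ∈ ⋃ i, Set.Ico (b i) (b (Order.succ i)) := hcover ▸ by simp [hx.zero]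
  simpa using hy

theorem notMem_range_of_lt_of_lt (hi : b i < y) (hi' : y < b (i + 1)) : y ∉ Set.range b := by
  rintro ⟨j, rfl⟩
  rw [hx.strictMono.lt_iff_lt] at hi hi'
  omega

end

section

variable (hx : IsParsing σ x a b) (hσ : IsMarkedSubstitution σ M h)

include hx hσ

theorem factor_cut_marker (i : ℕ) : factor x (b i) M.length = M := by
  have hM := hσ.marker_isPrefix (hx.block_mem i)
  rw [← take_factor (by simpa using hM.length_le)]
  exact (List.prefix_iff_eq_take.mp hM).symm

theorem cut_add_marker_le (i : ℕ) : b i + M.length ≤ b (i + 1) := by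
  have hM := (hσ.marker_isPrefix (hx.block_mem i)).length_le
  rw [length_factor] at hM
  have := hx.cut_lt i
  omega

theorem factor_eq_marker_iff : factor x y M.length = M ↔ y ∈ Set.range b := by
  refine ⟨fun hy => ?_, fun ⟨i, hi⟩ => hi ▸ hx.factor_cut_marker hσ i⟩
  obtain ⟨i, hi, hi'⟩ := hx.exists_cut_le_lt y
  by_contra hyb
  have hlt : b i < y := lt_of_le_of_ne hi fun h => hyb ⟨i, h⟩
  refine hσ.not_marker_isPrefix_drop (hx.block_mem i) (Nat.sub_pos_of_lt hlt)
    (by rw [length_factor]; omega) ?_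
  have hM := hx.factor_cut_marker hσ (i + 1)
  rw [← Nat.add_sub_of_le (hx.cut_lt i).le] at hM
  conv => arg 2; rw [← hM]
  rw [← factor_add, drop_factor (by omega), Nat.add_sub_of_le hi]
  conv => arg 1; rw [← hy]
  exact factor_isPrefix_factor (by omega)

theorem mem_range_add_period_iff (hsq : HasSquareAt x s p) (hy : s ≤ y)
    (hy' : y + M.length ≤ s + p) : y + p ∈ Set.range b ↔ y ∈ Set.range b := by
  rw [← hx.factor_eq_marker_iff hσ, ← hx.factor_eq_marker_iff hσ, hsq.factor_eq hy hy']

theorem cut_add_two_add_marker_lt (ha : a.get i ≠ a.get (i + 1)) (hsq : HasSquareAt x s p)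
    (hi : b i ≤ s) : b (i + 2) + M.length < s + p + p := by
  by_contra! hle
  have hprod : factor x (b i) (b (i + 1) - b i) ++ factor x (b (i + 1)) (b (i + 2) - b (i + 1)) ++ M
      = factor x (b i) (b (i + 2) + M.length - b i) := by
    have h₁ := hx.cut_lt i
    have h₂ := hx.cut_lt (i + 1)
    have hM := hx.factor_cut_marker hσ (i + 2)
    rw [show b (i + 2) + M.length - b i = b (i + 1) - b i + (b (i + 2) - b (i + 1)) + M.length by
      grind, factor_add, factor_add]
    grind
  have hfree := hσ.squareFreeWord ha (hx.block_mem i) (hx.block_mem (i + 1))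
  have hnil : factor x s p = [] := by
    apply hfree
    rw [hprod]
    nth_rw 2 [hsq.2]
    rw [← factor_add]
    exact factor_isInfix_factor hi (by omega)
  exact hsq.1.ne' (by simpa using congrArg List.length hnil)

theorem next_cut_add_period_mem_range (ha : a.get i ≠ a.get (i + 1)) (hsq : HasSquareAt x s p)
    (hi : b i ≤ s) (hi' : s < b (i + 1)) : b (i + 1) ≤ s + p ∧ b (i + 1) + p ∈ Set.range b := by
  have hend := hx.cut_add_two_add_marker_lt hσ ha hsq hi
  have hM := hx.cut_add_marker_le hσ (i + 1)
  have hlt : b (i + 1) < b (i + 2) := hx.cut_lt (i + 1)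
  rcases le_or_gt (b (i + 2)) (s + p) with hle | hgt
  · exact ⟨by omega, (hx.mem_range_add_period_iff hσ hsq (by omega) (by grind)).mpr ⟨i + 1, rfl⟩⟩
  · -- Going back one period from `b (i + 2)` leads to a cut after `b i`, which must be `b (i + 1)`.
    have hback : b (i + 2) - p + p = b (i + 2) := by omega
    have hmem : b (i + 2) - p ∈ Set.range b := by
      rw [← hx.mem_range_add_period_iff hσ hsq (by omega) (by omega), hback]
      exact ⟨i + 2, rfl⟩
    obtain ⟨k, hk⟩ := hmem
    have hki : k = i + 1 := by
      have h₁ : b i < b k := by omega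
      have h₂ : b k < b (i + 2) := by have := hsq.1; omega
      rw [hx.strictMono.lt_iff_lt] at h₁ h₂
      omega
    subst hki
    exact ⟨by omega, i + 2, by omega⟩

theorem next_cut_eq_add_period (hsq : HasSquareAt x s p) (hs : s ≤ b m) (hm : b (m + 1) ≤ s + p)
    (hk : b k = b m + p) : b (k + 1) = b (m + 1) + p ∧ a.get m = a.get k := by
  have hcopy := hsq.factor_eq (r := b (m + 1) - b m) hs (by have := hx.cut_lt m; omega)
  have hblocks : factor x (b m) (b (m + 1) - b m) = factor x (b k) (b (k + 1) - b k) := by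
    rcases le_total (b (m + 1) - b m) (b (k + 1) - b k) with hle | hle
    · refine hσ.eq_of_isPrefix (hx.block_mem m) (hx.block_mem k) ?_
      rw [hcopy, ← hk]
      exact factor_isPrefix_factor hle
    · refine (hσ.eq_of_isPrefix (hx.block_mem k) (hx.block_mem m) ?_).symm
      rw [hcopy, ← hk]
      exact factor_isPrefix_factor hle
  have hlen : b (m + 1) - b m = b (k + 1) - b k := by simpa using congrArg List.length hblocks
  refine ⟨by have := hx.cut_lt m; have := hx.cut_lt k; omega, ?_⟩
  exact hσ.eq_of_take_eq (hx.block_mem m) (hx.block_mem k) (by rw [hblocks])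

theorem cut_add_eq_add_period (hsq : HasSquareAt x s p) (hs : s ≤ b m) (hr : b (m + r) ≤ s + p)
    (hk : b k = b m + p) :
    b (k + r) = b (m + r) + p ∧ ∀ t < r, a.get (m + t) = a.get (k + t) := by
  induction r with
  | zero => simpa using hk
  | succ r ih =>
    obtain ⟨hcut, hletters⟩ := ih ((hx.cut_lt (m + r)).le.trans hr)
    have hstep := hx.next_cut_eq_add_period hσ hsq
      (hs.trans (hx.strictMono.monotone (Nat.le_add_right m r))) hr hcut
    refine ⟨hstep.1, fun t ht => ?_⟩
    rcases Nat.lt_succ_iff_lt_or_eq.mp ht with ht | rfl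
    exacts [hletters t ht, hstep.2]

theorem eq_add_one_of_cut_eq_next_cut_add_period (hsq : HasSquareAt x s p) (hi : b i ≤ s)
    (hi' : s < b (i + 1)) (hip : b (i + 1) ≤ s + p) (hm : b m ≤ s + p) (hm' : s + p < b (m + 1))
    (hj : b j = b (i + 1) + p) : j = m + 1 := by
  have hmj : m < j := hx.strictMono.lt_iff_lt.mp (by omega)
  by_contra hne
  have hle : b (m + 2) ≤ b j := hx.strictMono.monotone (by omega)
  have hM : b (m + 1) + M.length ≤ b (m + 2) := hx.cut_add_marker_le hσ (m + 1)
  have hback : b (m + 1) - p + p = b (m + 1) := by omega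
  have hlt : b (m + 1) < b (m + 2) := hx.cut_lt (m + 1)
  refine hx.notMem_range_of_lt_of_lt (i := i) (y := b (m + 1) - p) (by omega) (by omega) ?_
  rw [← hx.mem_range_add_period_iff hσ hsq (by omega) (by omega), hback]
  exact ⟨m + 1, rfl⟩

theorem two_mul_le_block_length (i : ℕ) : 2 * h ≤ b (i + 1) - b i := by
  simpa using hσ.two_mul_le_length (hx.block_mem i)

theorem letter_eq_of_factor_eq (hf : factor x (b i) h = factor x (b j) h) :
    a.get i = a.get j := by
  have hi := hx.two_mul_le_block_length hσ i
  have hj := hx.two_mul_le_block_length hσ j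
  refine hσ.eq_of_take_eq (hx.block_mem i) (hx.block_mem j) ?_
  rwa [take_factor (by omega), take_factor (by omega)]

theorem letter_eq_of_factor_sub_eq
    (hf : factor x (b (i + 1) - h) h = factor x (b (j + 1) - h) h) : a.get i = a.get j := by
  have rtake_block (k : ℕ) :
      (factor x (b k) (b (k + 1) - b k)).rtake h = factor x (b (k + 1) - h) h := by
    have hk := hx.two_mul_le_block_length hσ k
    have hlt := hx.cut_lt k
    rw [List.rtake, length_factor, drop_factor (by omega)]
    congr 1 <;> omega
  exact hσ.eq_of_rtake_eq (hx.block_mem i) (hx.block_mem j) (by rwa [rtake_block, rtake_block])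

theorem exists_hasSquareAt_letters (ha : ∀ i, a.get i ≠ a.get (i + 1)) (hsq : HasSquareAt x s p) :
    ∃ i q m, HasSquareAt a i q ∧ b (m + q) = b m + p := by
  obtain ⟨i, hi, hi'⟩ := hx.exists_cut_le_lt s
  obtain ⟨hip, j, hj⟩ := hx.next_cut_add_period_mem_range hσ (ha i) hsq hi hi'
  obtain ⟨m, hm, hm'⟩ := hx.exists_cut_le_lt (s + p)
  obtain rfl := hx.eq_add_one_of_cut_eq_next_cut_add_period hσ hsq hi hi' hip hm hm' hj
  obtain ⟨r, rfl⟩ : ∃ r, m = i + 1 + r :=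
    Nat.exists_eq_add_of_le (Nat.lt_succ_iff.mp (hx.strictMono.lt_iff_lt.mp (hip.trans_lt hm')))
  obtain ⟨hcut, hletters⟩ := hx.cut_add_eq_add_period hσ hsq hi'.le hm hj
  have hlen := hx.two_mul_le_block_length hσ (i + 1 + r)
  -- The block around the centre of the square has at least `h` letters on one side of the centre.
  rcases le_or_gt h (s + p - b (i + 1 + r)) with hle | hgt
  · have hlast : a.get (i + 1 + r) = a.get (i + 1 + r + 1 + r) := by
      refine hx.letter_eq_of_factor_eq hσ ?_
      rw [hcut]
      exact hsq.factor_eq (hi'.le.trans (hx.strictMono.monotone (Nat.le_add_right _ r))) (by omega)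
    refine ⟨i + 1, r + 1, i + 1, ⟨r.succ_pos, factor_eq_factor_iff.mpr fun t ht => ?_⟩, hj⟩
    rcases Nat.lt_succ_iff_lt_or_eq.mp ht with ht | rfl
    exacts [hletters t ht, hlast]
  · have hfirst : a.get i = a.get (i + 1 + r) := by
      refine hx.letter_eq_of_factor_sub_eq hσ ?_
      rw [hj, Nat.sub_add_comm (by omega)]
      exact hsq.factor_eq (by omega) (by omega)
    refine ⟨i, r + 1, i + 1, ⟨r.succ_pos, factor_eq_factor_iff.mpr fun t ht => ?_⟩, hj⟩
    cases t with
    | zero => convert hfirst using 2 <;> omega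
    | succ t => convert hletters t (by omega) using 2 <;> omega

end

end IsParsing

section Cycle

variable {α β : Type*} {u w : List α} {k n p s : ℕ}

theorem drop_length_cycle (hw : w ≠ []) :
    (Stream'.cycle w hw).drop w.length = Stream'.cycle w hw := by
  conv_lhs => rw [Stream'.cycle_eq, Stream'.drop_append_stream]

theorem drop_length_mul_cycle (hw : w ≠ []) (m : ℕ) :
    (Stream'.cycle w hw).drop (w.length * m) = Stream'.cycle w hw := by
  induction m with
  | zero => rfl
  | succ m ih => rw [Nat.mul_succ, ← Stream'.drop_drop, ih, drop_length_cycle]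

theorem take_length_add_cycle (hw : w ≠ []) (m : ℕ) :
    (Stream'.cycle w hw).take (w.length + m) = w ++ (Stream'.cycle w hw).take m := by
  rw [Stream'.take_add, drop_length_cycle]
  congr 1
  rw [Stream'.cycle_eq, Stream'.take_append_of_le_length _ _ _ le_rfl, List.take_length]

theorem take_length_mul_cycle (hw : w ≠ []) (m : ℕ) :
    (Stream'.cycle w hw).take (w.length * m) = (List.replicate m w).flatten := by
  induction m with
  | zero => rfl
  | succ m ih =>
    rw [Nat.mul_succ, add_comm, take_length_add_cycle, ih, List.replicate_succ, List.flatten_cons]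

theorem factor_cycle_mod (hw : w ≠ []) (s n : ℕ) :
    factor (Stream'.cycle w hw) s n = factor (Stream'.cycle w hw) (s % w.length) n := by
  conv_lhs => rw [← Nat.div_add_mod s w.length, factor, ← Stream'.drop_drop, drop_length_mul_cycle]
  rfl

theorem occursCyc_iff_exists_factor (hw : w ≠ []) :
    OccursCyc w u ↔ ∃ s, factor (Stream'.cycle w hw) s u.length = u := by
  constructor
  · rintro ⟨k, hk⟩
    rw [← take_length_mul_cycle hw] at hk
    exact exists_factor_eq_of_isInfix_take hk
  · rintro ⟨s, hs⟩
    refine ⟨s + u.length, ?_⟩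
    rw [← take_length_mul_cycle hw, ← hs, length_factor]
    refine factor_isInfix_factor (i := 0) s.zero_le ?_
    rw [zero_add]
    exact Nat.le_mul_of_pos_left _ (List.length_pos_iff.mpr hw)

theorem isPower_two_iff : IsPower 2 p u ↔ 0 < p ∧ ∃ v : List α, v.length = p ∧ u = v ++ v := by
  simp [IsPower, List.replicate_succ]

theorem avoidsPowerCyc_two_iff_hasSquareAt (hw : w ≠ []) :
    AvoidsPowerCyc 2 w ↔ ∀ s p, HasSquareAt (Stream'.cycle w hw) s p → w.length ≤ p := by
  simp only [AvoidsPowerCyc, isPower_two_iff, occursCyc_iff_exists_factor hw]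
  constructor
  · rintro h s p ⟨hp, hsq⟩
    refine h p _ ⟨hp, factor (Stream'.cycle w hw) s p, length_factor, rfl⟩ ⟨s, ?_⟩
    rw [List.length_append, length_factor, factor_add, ← hsq]
  · rintro h p _ ⟨hp, v, rfl, rfl⟩ ⟨s, hs⟩
    rw [List.length_append, factor_add] at hs
    obtain ⟨h₁, h₂⟩ := List.append_inj hs length_factor
    exact h s v.length ⟨hp, h₁.trans h₂.symm⟩

/-- A square of period less than `|w|` in `w^ω` starts, up to a shift, in the first copy of `w`,
hence it ends by the third. -/
theorem avoidsPowerCyc_two_of_forall_not_isInfix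
    (h : ∀ u, u ≠ [] → u.length < w.length → ¬ u ++ u <:+: w ++ w ++ w) : AvoidsPowerCyc 2 w := by
  rcases eq_or_ne w [] with rfl | hw
  · exact fun _ _ _ _ => Nat.zero_le _
  rw [avoidsPowerCyc_two_iff_hasSquareAt hw]
  rintro s p ⟨hp, hsq⟩
  by_contra! hlt
  have hmod : s % w.length < w.length := Nat.mod_lt _ (List.length_pos_iff.mpr hw)
  have hthree : w ++ w ++ w = factor (Stream'.cycle w hw) 0 (w.length * 3) := by
    simp [factor, take_length_mul_cycle, List.replicate_succ]
  refine h (factor (Stream'.cycle w hw) s p) ?_ (by simpa using hlt) ?_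
  · exact List.ne_nil_of_length_pos (by simpa using hp)
  · nth_rw 2 [hsq]
    rw [← factor_add, factor_cycle_mod, hthree]
    exact factor_isInfix_factor (Nat.zero_le _) (by omega)

theorem forall₂_get_cycle {R : α → β → Prop} {v : List α} {w : List β} (h : List.Forall₂ R v w)
    (hv : v ≠ []) (hw : w ≠ []) (i : ℕ) :
    R ((Stream'.cycle v hv).get i) ((Stream'.cycle w hw).get i) := by
  induction i using Nat.strong_induction_on with
  | _ i ih =>
    rw [Stream'.cycle_eq v, Stream'.cycle_eq w]
    rcases lt_or_ge i v.length with hi | hi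
    · rw [Stream'.get_append_left _ _ _ hi, Stream'.get_append_left _ _ _ (h.length_eq ▸ hi)]
      exact h.get hi (h.length_eq ▸ hi)
    · obtain ⟨j, rfl⟩ := Nat.exists_eq_add_of_le hi
      rw [Stream'.get_append_right, h.length_eq, Stream'.get_append_right]
      exact ih j (Nat.lt_add_of_pos_left (List.length_pos_iff.mpr hv))

theorem take_length_flatten_cycle {Bs : List (List α)} (hBs : Bs ≠ []) (hw : Bs.flatten ≠ [])
    (i : ℕ) :
    (Stream'.cycle Bs.flatten hw).take ((Stream'.cycle Bs hBs).take i).flatten.length =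
      ((Stream'.cycle Bs hBs).take i).flatten := by
  have hprefix : ((Stream'.cycle Bs hBs).take i).flatten <+:
      (Stream'.cycle Bs.flatten hw).take (Bs.flatten.length * i) := by
    rw [take_length_mul_cycle hw, ← List.map_replicate, ← List.flatten_flatten,
      ← take_length_mul_cycle hBs]
    exact (factor_isPrefix_factor (i := 0)
      (Nat.le_mul_of_pos_left i (List.length_pos_iff.mpr hBs))).flatten
  have hlen := hprefix.length_le
  rw [Stream'.length_take] at hlen
  rw [List.prefix_iff_eq_take.mp hprefix, Stream'.take_take]
  simp

end Cycle

section Substitution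

open scoped Pointwise

variable {α β : Type*} {σ : β → Set (List α)} {M : List α} {h : ℕ} {v : List β}
  {Bs : List (List α)}

theorem IsMarkedSubstitution.ne_nil (hσ : IsMarkedSubstitution σ M h) {c : β} {A : List α}
    (hA : A ∈ σ c) : A ≠ [] := by
  rintro rfl
  exact hσ.marker_ne_nil (List.prefix_nil.mp (hσ.marker_isPrefix hA))

theorem IsMarkedSubstitution.isParsing_cycle (hσ : IsMarkedSubstitution σ M h)
    (hvBs : List.Forall₂ (fun c A => A ∈ σ c) v Bs) (hv : v ≠ []) (hBs : Bs ≠ [])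
    (hw : Bs.flatten ≠ []) :
    IsParsing σ (Stream'.cycle Bs.flatten hw) (Stream'.cycle v hv)
      (fun i => ((Stream'.cycle Bs hBs).take i).flatten.length) := by
  have hmem := forall₂_get_cycle hvBs hv hBs
  have hsucc (i : ℕ) : ((Stream'.cycle Bs hBs).take (i + 1)).flatten =
      ((Stream'.cycle Bs hBs).take i).flatten ++ (Stream'.cycle Bs hBs).get i := by
    rw [Stream'.take_succ', List.flatten_append, List.flatten_singleton]
  refine ⟨rfl, strictMono_nat_of_lt_succ fun i => ?_, fun i => ?_⟩
  · simpa [hsucc i, List.length_pos_iff] using hσ.ne_nil (hmem i)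
  · convert hmem i
    have htake := take_length_flatten_cycle hBs hw (i + 1)
    rw [hsucc, List.length_append, Stream'.take_add, take_length_flatten_cycle] at htake
    simpa [hsucc, factor] using List.append_cancel_left htake

theorem IsMarkedSubstitution.avoidsPowerCyc_two_flatten (hσ : IsMarkedSubstitution σ M h)
    (hvBs : List.Forall₂ (fun c A => A ∈ σ c) v Bs) (hlen : 2 ≤ v.length)
    (hv : AvoidsPowerCyc 2 v) : AvoidsPowerCyc 2 Bs.flatten := by
  rcases eq_or_ne Bs.flatten [] with hnil | hw
  · exact fun _ _ _ _ => by simp [hnil]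
  have hv₀ : v ≠ [] := List.ne_nil_of_length_pos (by omega)
  have hBs : Bs ≠ [] := List.ne_nil_of_length_pos (by rw [← hvBs.length_eq]; omega)
  rw [avoidsPowerCyc_two_iff_hasSquareAt hv₀] at hv
  rw [avoidsPowerCyc_two_iff_hasSquareAt hw]
  have hx := hσ.isParsing_cycle hvBs hv₀ hBs hw
  intro s p hsq
  have hadj (i : ℕ) : (Stream'.cycle v hv₀).get i ≠ (Stream'.cycle v hv₀).get (i + 1) := by
    intro heq
    have := hv i 1 ⟨one_pos, factor_eq_factor_iff.mpr (by simpa using heq)⟩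
    omega
  obtain ⟨i, q, m, hsq', hcut⟩ := hx.exists_hasSquareAt_letters hσ hadj hsq
  have hmono := hx.strictMono.monotone (Nat.add_le_add_left (hv i q hsq') m)
  rw [hcut, add_comm m, hvBs.length_eq, take_length_add_cycle] at hmono
  simpa [add_comm] using hmono

theorem exists_forall₂_length_flatten {S : Set ℕ} {L H n : ℕ} (hL : L ∈ S) (hH : H ∈ S)
    (hS : Set.Icc (L * 2) (H * 2) ⊆ S + S) (hσ : ∀ c, S ⊆ List.length '' σ c)
    (hv : 2 ≤ v.length) (hn : n ∈ Set.Icc (L * v.length) (H * v.length)) :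
    ∃ Bs, List.Forall₂ (fun c A => A ∈ σ c) v Bs ∧ Bs.flatten.length = n := by
  have hLH : L ≤ H := le_of_mul_le_mul_right (hn.1.trans hn.2) (two_pos.trans_le hv)
  induction v generalizing n with
  | nil => simp at hv
  | cons c v ih =>
    rw [List.length_cons] at hv hn
    rcases (Nat.le_of_succ_le_succ hv).eq_or_lt with hone | htwo
    · obtain ⟨d, rfl⟩ := List.length_eq_one_iff.mp hone.symm
      obtain ⟨i, hi, j, hj, rfl⟩ := hS hn
      obtain ⟨A, hA, rfl⟩ := hσ c hi
      obtain ⟨B, hB, rfl⟩ := hσ d hj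
      exact ⟨[A, B], .cons hA (.cons hB .nil), by simp⟩
    · have hmul : L * v.length + H ≤ H * v.length + L := by nlinarith
      rw [Nat.mul_succ, Nat.mul_succ, Set.mem_Icc] at hn
      obtain ⟨m, hm, hmn, hnm⟩ : ∃ m ∈ S, L * v.length + m ≤ n ∧ n ≤ H * v.length + m := by
        rcases le_or_gt n (H * v.length + L) with hle | hgt
        exacts [⟨L, hL, hn.1, hle⟩, ⟨H, hH, by omega, hn.2⟩]
      obtain ⟨A, hA, rfl⟩ := hσ c hm
      obtain ⟨Bs, hBs, hlen⟩ := ih htwo (n := n - A.length) ⟨by omega, by omega⟩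
      exact ⟨A :: Bs, .cons hA hBs, by rw [List.flatten_cons, List.length_append]; omega⟩

end Substitution

section SquareTest

variable {α : Type*} [DecidableEq α] {p r : ℕ} {l t t' u v z z' : List α}

/-- Whether `l` and `l'` agree at `p` consecutive positions, given that they already agreed at the
`r` positions before their start. -/
def hasAgreementRun (p r : ℕ) : List α → List α → Bool
  | c :: l, d :: l' =>
    if c = d then r + 1 == p || hasAgreementRun p (r + 1) l l' else hasAgreementRun p 0 l l'
  | _, _ => false

/-- A linear-time test for a square of period `p` in `l`: such a square is a run of `p` agreements
between `l` and `l` shifted by `p`. -/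
def hasSquareOfPeriod (p : ℕ) (l : List α) : Bool := hasAgreementRun p 0 l (l.drop p)

theorem hasAgreementRun_append_append (hr : r < p) (hv : p ≤ r + v.length) :
    hasAgreementRun p r (v ++ t) (v ++ t') = true := by
  induction v generalizing r with
  | nil => simp at hv; omega
  | cons c v ih =>
    rw [List.length_cons] at hv
    rcases eq_or_ne (r + 1) p with hp | hp
    · simp [hasAgreementRun, hp]
    · simp [hasAgreementRun, ih (r := r + 1) (by omega) (by omega)]

theorem hasAgreementRun_append_append_append (hr : r < p) (hv : p ≤ v.length)
    (hz : z.length = z'.length) : hasAgreementRun p r (z ++ v ++ t) (z' ++ v ++ t') = true := by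
  induction z generalizing r z' with
  | nil =>
    obtain rfl := List.length_eq_zero_iff.mp hz.symm
    simpa using hasAgreementRun_append_append hr (hv.trans (Nat.le_add_left _ r))
  | cons c z ih =>
    obtain ⟨d, z', rfl⟩ := List.exists_cons_of_length_eq_add_one hz.symm
    have hz' : z.length = z'.length := by simpa using hz
    rcases eq_or_ne c d with rfl | hcd
    · rcases eq_or_ne (r + 1) p with hp | hp
      · simp [hasAgreementRun, hp]
      · simpa [hasAgreementRun] using Or.inr (ih (r := r + 1) (by omega) hz')
    · simpa [hasAgreementRun, hcd] using ih (r := 0) (by omega) hz'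

theorem hasSquareOfPeriod_of_isInfix (hu : u ≠ []) (h : u ++ u <:+: l) :
    hasSquareOfPeriod u.length l = true := by
  obtain ⟨z, t, rfl⟩ := h
  have hshift : (z ++ (u ++ u) ++ t).drop u.length = (z ++ u).drop u.length ++ u ++ t := by
    rw [← List.append_assoc z, List.append_assoc, List.drop_append_of_le_length (by simp),
      List.append_assoc]
  rw [hasSquareOfPeriod, hshift, ← List.append_assoc z, List.append_assoc (z ++ u)]
  exact hasAgreementRun_append_append_append (List.length_pos_iff.mpr hu) le_rfl (by simp)

theorem squareFreeWord_of_hasSquareOfPeriod_eq_false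
    (h : ∀ p < l.length / 2, hasSquareOfPeriod (p + 1) l = false) : SquareFreeWord l := by
  intro u hul
  by_contra hu
  have hpos := List.length_pos_iff.mpr hu
  have hle := hul.length_le
  rw [List.length_append] at hle
  have hfalse := h (u.length - 1) (by omega)
  rw [Nat.sub_add_cancel hpos, hasSquareOfPeriod_of_isInfix hu hul] at hfalse
  contradiction

theorem avoidsPowerCyc_two_of_hasSquareOfPeriod_eq_false
    (h : ∀ p < l.length - 1, hasSquareOfPeriod (p + 1) (l ++ l ++ l) = false) :
    AvoidsPowerCyc 2 l := by
  refine avoidsPowerCyc_two_of_forall_not_isInfix fun u hu hlt hul => ?_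
  have hpos := List.length_pos_iff.mpr hu
  have hfalse := h (u.length - 1) (by omega)
  rw [Nat.sub_add_cancel hpos, hasSquareOfPeriod_of_isInfix hu hul] at hfalse
  contradiction

end SquareTest

section Ternary

open scoped Pointwise

/-- The marker at the start of every block. -/
def marker : List (Fin 3) := [0, 1, 0, 2, 1]

/-- The lengths of the blocks for each letter, whose sums of two fill an interval. -/
def blockLengths : Finset ℕ := {19, 20, 22, 24, 26, 27, 28}

/-- The blocks of the substitution, one for each letter and each length in `blockLengths`, found by
computer search. -/
def blocks : Fin 3 → List (List (Fin 3))
  | 0 => [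
      [0, 1, 0, 2, 1, 0, 1, 2, 0, 2, 1, 2, 0, 1, 2, 1, 0, 1, 2],
      [0, 1, 0, 2, 1, 0, 1, 2, 0, 2, 1, 0, 2, 0, 1, 2, 1, 0, 1, 2],
      [0, 1, 0, 2, 1, 0, 1, 2, 0, 2, 1, 2, 0, 1, 0, 2, 0, 1, 2, 1, 0, 2],
      [0, 1, 0, 2, 1, 0, 1, 2, 0, 2, 1, 2, 0, 1, 0, 2, 0, 1, 2, 0, 2, 1, 0, 2],
      [0, 1, 0, 2, 1, 0, 1, 2, 0, 2, 1, 2, 0, 1, 2, 1, 0, 2, 0, 1, 2, 0, 2, 1, 0, 2],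
      [0, 1, 0, 2, 1, 0, 1, 2, 0, 2, 1, 0, 2, 0, 1, 2, 0, 2, 1, 2, 0, 1, 2, 1, 0, 1, 2],
      [0, 1, 0, 2, 1, 0, 1, 2, 0, 2, 1, 0, 2, 0, 1, 2, 1, 0, 2, 1, 2, 0, 1, 2, 1, 0, 1, 2]]
  | 1 => [
      [0, 1, 0, 2, 1, 0, 1, 2, 1, 0, 2, 1, 2, 0, 1, 2, 1, 0, 2],
      [0, 1, 0, 2, 1, 0, 1, 2, 1, 0, 2, 0, 1, 2, 0, 2, 1, 0, 1, 2],
      [0, 1, 0, 2, 1, 0, 1, 2, 1, 0, 2, 1, 2, 0, 2, 1, 0, 1, 2, 1, 0, 2],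
      [0, 1, 0, 2, 1, 0, 1, 2, 1, 0, 2, 0, 1, 2, 0, 2, 1, 2, 0, 1, 2, 1, 0, 2],
      [0, 1, 0, 2, 1, 0, 1, 2, 1, 0, 2, 1, 2, 0, 1, 0, 2, 0, 1, 2, 0, 2, 1, 0, 1, 2],
      [0, 1, 0, 2, 1, 0, 1, 2, 1, 0, 2, 0, 1, 2, 1, 0, 1, 2, 0, 2, 1, 0, 1, 2, 1, 0, 2],
      [0, 1, 0, 2, 1, 0, 1, 2, 1, 0, 2, 0, 1, 2, 1, 0, 1, 2, 0, 2, 1, 2, 0, 1, 2, 1, 0, 2]]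
  | 2 => [
      [0, 1, 0, 2, 1, 2, 0, 2, 1, 0, 2, 0, 1, 2, 1, 0, 2, 1, 2],
      [0, 1, 0, 2, 1, 2, 0, 1, 2, 1, 0, 2, 1, 2, 0, 2, 1, 0, 1, 2],
      [0, 1, 0, 2, 1, 2, 0, 2, 1, 0, 1, 2, 1, 0, 2, 1, 2, 0, 2, 1, 0, 2],
      [0, 1, 0, 2, 1, 2, 0, 2, 1, 0, 1, 2, 0, 2, 1, 2, 0, 1, 2, 1, 0, 2, 1, 2],
      [0, 1, 0, 2, 1, 2, 0, 2, 1, 0, 2, 0, 1, 2, 0, 2, 1, 2, 0, 1, 2, 1, 0, 2, 1, 2],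
      [0, 1, 0, 2, 1, 2, 0, 1, 2, 1, 0, 2, 1, 2, 0, 2, 1, 0, 2, 0, 1, 2, 1, 0, 2, 1, 2],
      [0, 1, 0, 2, 1, 2, 0, 2, 1, 0, 1, 2, 0, 2, 1, 2, 0, 1, 2, 1, 0, 1, 2, 0, 2, 1, 0, 2]]

/-- Words that avoid squares cyclically, found by computer search: one for each length below `38`
for which there is one, and one of length `113`, which is above `28 * 4` and below `19 * 6`. -/
def baseWords : List (List (Fin 3)) := [
  [0],
  [0, 1],
  [0, 1, 2],
  [0, 1, 0, 2],
  [0, 1, 0, 2, 1, 2],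
  [0, 1, 0, 2, 1, 0, 1, 2],
  [0, 1, 0, 2, 0, 1, 2, 0, 2, 1, 2],
  [0, 1, 0, 2, 0, 1, 2, 1, 0, 2, 1, 2],
  [0, 1, 0, 2, 0, 1, 2, 0, 2, 1, 0, 1, 2],
  [0, 1, 0, 2, 0, 1, 2, 1, 0, 1, 2, 0, 2, 1, 2],
  [0, 1, 0, 2, 0, 1, 2, 1, 0, 2, 0, 1, 0, 2, 1, 2],
  [0, 1, 0, 2, 0, 1, 2, 0, 2, 1, 0, 1, 2, 1, 0, 2, 1, 2],
  [0, 1, 0, 2, 0, 1, 2, 0, 2, 1, 0, 2, 0, 1, 2, 1, 0, 1, 2],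
  [0, 1, 0, 2, 0, 1, 2, 0, 2, 1, 0, 2, 0, 1, 0, 2, 1, 0, 1, 2],
  [0, 1, 0, 2, 1, 0, 1, 2, 0, 2, 1, 0, 2, 0, 1, 2, 1, 0, 2, 1, 2],
  [0, 1, 0, 2, 0, 1, 2, 0, 2, 1, 0, 1, 2, 1, 0, 2, 0, 1, 0, 2, 1, 2],
  [0, 1, 0, 2, 0, 1, 2, 0, 2, 1, 0, 1, 2, 1, 0, 2, 0, 1, 2, 0, 2, 1, 2],
  [0, 1, 0, 2, 0, 1, 2, 0, 2, 1, 0, 1, 2, 1, 0, 2, 0, 1, 0, 2, 1, 0, 1, 2],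
  [0, 1, 0, 2, 0, 1, 2, 0, 2, 1, 0, 1, 2, 0, 1, 0, 2, 0, 1, 2, 1, 0, 2, 1, 2],
  [0, 1, 0, 2, 0, 1, 2, 0, 2, 1, 0, 1, 2, 0, 1, 0, 2, 1, 0, 1, 2, 1, 0, 2, 1, 2],
  [0, 1, 0, 2, 0, 1, 2, 0, 2, 1, 0, 1, 2, 0, 1, 0, 2, 1, 2, 0, 1, 2, 1, 0, 2, 1, 2],
  [0, 1, 0, 2, 0, 1, 2, 0, 2, 1, 0, 1, 2, 0, 1, 0, 2, 0, 1, 2, 1, 0, 1, 2, 0, 2, 1, 2],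
  [0, 1, 0, 2, 0, 1, 2, 0, 2, 1, 0, 1, 2, 0, 1, 0, 2, 0, 1, 2, 1, 0, 2, 0, 1, 0, 2, 1, 2],
  [0, 1, 0, 2, 0, 1, 2, 0, 2, 1, 0, 1, 2, 0, 1, 0, 2, 1, 0, 1, 2, 1, 0, 2, 0, 1, 0, 2, 1, 2],
  [0, 1, 0, 2, 0, 1, 2, 0, 2, 1, 0, 1, 2, 0, 1, 0, 2, 1, 0, 1, 2, 1, 0, 2, 0, 1, 2, 0, 2, 1, 2],
  [0, 1, 0, 2, 0, 1, 2, 0, 2, 1, 0, 1, 2, 0, 1, 0, 2, 0, 1, 2, 0, 2, 1, 2, 0, 1, 2, 1, 0, 2, 1,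
   2],
  [0, 1, 0, 2, 0, 1, 2, 0, 2, 1, 0, 1, 2, 0, 1, 0, 2, 1, 0, 1, 2, 0, 2, 1, 0, 2, 0, 1, 2, 0, 2, 1,
   2],
  [0, 1, 0, 2, 0, 1, 2, 0, 2, 1, 0, 1, 2, 0, 1, 0, 2, 1, 0, 1, 2, 0, 2, 1, 0, 2, 0, 1, 0, 2, 1, 0,
   1, 2],
  [0, 1, 0, 2, 0, 1, 2, 0, 2, 1, 0, 1, 2, 0, 1, 0, 2, 0, 1, 2, 0, 2, 1, 2, 0, 1, 2, 1, 0, 1, 2, 0,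
   2, 1, 2],
  [0, 1, 0, 2, 0, 1, 2, 0, 2, 1, 0, 1, 2, 0, 1, 0, 2, 0, 1, 2, 0, 2, 1, 2, 0, 1, 0, 2, 0, 1, 2, 1,
   0, 2, 1, 2],
  [0, 1, 0, 2, 0, 1, 2, 0, 2, 1, 0, 1, 2, 0, 1, 0, 2, 0, 1, 2, 0, 2, 1, 2, 0, 1, 0, 2, 1, 0, 1, 2,
   1, 0, 2, 1, 2],
  [0, 1, 0, 2, 1, 2, 0, 2, 1, 0, 1, 2, 0, 2, 1, 2, 0, 1, 2, 1, 0, 2, 0, 1, 0, 2, 1, 0, 1, 2, 1, 0,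
   2, 0, 1, 2, 0, 2, 1, 2, 0, 1, 0, 2, 1, 0, 1, 2, 1, 0, 2, 0, 1, 0, 2, 1, 2, 0, 1, 2, 1, 0, 1, 2,
   0, 1, 0, 2, 0, 1, 2, 0, 2, 1, 0, 1, 2, 0, 1, 0, 2, 1, 0, 1, 2, 0, 2, 1, 0, 2, 0, 1, 0, 2, 1, 0,
   1, 2, 0, 1, 0, 2, 0, 1, 2, 1, 0, 1, 2, 0, 2, 1, 2]]

set_option maxRecDepth 100000 in
theorem hasSquareOfPeriod_blocks_eq_false : ∀ c d, c ≠ d → ∀ A ∈ blocks c, ∀ B ∈ blocks d,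
    ∀ p < (A ++ B ++ marker).length / 2, hasSquareOfPeriod (p + 1) (A ++ B ++ marker) = false := by
  decide +kernel

theorem isMarkedSubstitution_blocks :
    IsMarkedSubstitution (fun c => {A | A ∈ blocks c}) marker 9 where
  marker_ne_nil := List.cons_ne_nil _ _
  marker_isPrefix {c A} := (by decide +kernel : ∀ c, ∀ A ∈ blocks c, marker <+: A) c A
  not_marker_isPrefix_drop {c A k} hA hk hkA :=
    (by decide +kernel : ∀ c, ∀ A ∈ blocks c, ∀ k < A.length, 0 < k →
      ¬ marker <+: (A ++ marker).drop k) c A hA k hkA hk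
  two_mul_le_length {c A} := (by decide +kernel : ∀ c, ∀ A ∈ blocks c, 2 * 9 ≤ A.length) c A
  eq_of_take_eq {c d A B} hA hB :=
    (by decide +kernel : ∀ c d, ∀ A ∈ blocks c, ∀ B ∈ blocks d, A.take 9 = B.take 9 → c = d)
      c d A hA B hB
  eq_of_rtake_eq {c d A B} hA hB :=
    (by decide +kernel : ∀ c d, ∀ A ∈ blocks c, ∀ B ∈ blocks d, A.rtake 9 = B.rtake 9 → c = d)
      c d A hA B hB
  eq_of_isPrefix {c d A B} hA hB :=
    (by decide +kernel : ∀ c d, ∀ A ∈ blocks c, ∀ B ∈ blocks d, A <+: B → A = B) c d A hA B hB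
  squareFreeWord {c d A B} hcd hA hB :=
    squareFreeWord_of_hasSquareOfPeriod_eq_false
      (hasSquareOfPeriod_blocks_eq_false c d hcd A hA B hB)

theorem exists_forall₂_blocks {v : List (Fin 3)} {n : ℕ} (hv : 2 ≤ v.length)
    (hn : n ∈ Set.Icc (19 * v.length) (28 * v.length)) :
    ∃ Bs, List.Forall₂ (fun c A => A ∈ blocks c) v Bs ∧ Bs.flatten.length = n := by
  have hsum : Finset.Icc (19 * 2) (28 * 2) ⊆ blockLengths + blockLengths := by decide +kernel
  have hlength : ∀ c, ∀ m ∈ blockLengths, ∃ A ∈ blocks c, A.length = m := by decide +kernel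
  refine exists_forall₂_length_flatten (S := blockLengths) (σ := fun c => {A | A ∈ blocks c})
    (by simp [blockLengths]) (by simp [blockLengths]) ?_ hlength hv hn
  rwa [← Finset.coe_add, ← Finset.coe_Icc, Finset.coe_subset]

theorem exists_avoidsPowerCyc_two_of_lt_38_or_eq_113 {n : ℕ} (hn : n < 38 ∨ n = 113) (hpos : 0 < n)
    (hexc : n ∉ ({5, 7, 9, 10, 14, 17} : Set ℕ)) :
    ∃ w : List (Fin 3), w.length = n ∧ AvoidsPowerCyc 2 w := by
  have hlength : ∀ n < 114, n < 38 ∨ n = 113 → 0 < n →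
      n ∉ ({5, 7, 9, 10, 14, 17} : Finset ℕ) → ∃ w ∈ baseWords, w.length = n := by
    decide +kernel
  have hsquare : ∀ w ∈ baseWords, ∀ p < w.length - 1,
      hasSquareOfPeriod (p + 1) (w ++ w ++ w) = false := by
    decide +kernel
  obtain ⟨w, hw, hwn⟩ := hlength n (by omega) hn hpos (by simpa using hexc)
  exact ⟨w, hwn, avoidsPowerCyc_two_of_hasSquareOfPeriod_eq_false (hsquare w hw)⟩

theorem exists_mem_Icc_nineteen_mul_twentyEight_mul {n : ℕ} (hn : 38 ≤ n) (hne : n ≠ 113) :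
    ∃ k, 2 ≤ k ∧ k ∉ ({5, 7, 9, 10, 14, 17} : Set ℕ) ∧ n ∈ Set.Icc (19 * k) (28 * k) := by
  rcases lt_or_ge n 342 with hsmall | hlarge
  · obtain ⟨k, hk, hle, hge⟩ :
        ∃ k ∈ [2, 3, 4, 6, 8, 11, 13], 19 * k ≤ n ∧ n ≤ 28 * k := by
      simp only [List.exists_mem_cons_iff]
      omega
    refine ⟨k, ?_, ?_, hle, hge⟩ <;> revert k <;> simp
  · refine ⟨n / 19, by omega, ?_, by omega, by omega⟩
    simp only [Set.mem_insert_iff, Set.mem_singleton_iff]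
    omega

end Ternary

theorem ternary_avoids_squares_cyclically :
    ∀ n : ℕ, 0 < n → n ∉ ({5, 7, 9, 10, 14, 17} : Set ℕ) →
      ∃ w : List (Fin 3), w.length = n ∧ AvoidsPowerCyc 2 w := by
  intro n
  induction n using Nat.strong_induction_on with
  | _ n ih =>
    intro hpos hexc
    by_cases hbase : n < 38 ∨ n = 113
    · exact exists_avoidsPowerCyc_two_of_lt_38_or_eq_113 hbase hpos hexc
    obtain ⟨k, hk, hkexc, hnk⟩ :=
      exists_mem_Icc_nineteen_mul_twentyEight_mul (n := n) (by omega) (by omega)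
    have hkn : k < n := (by omega : k < 19 * k).trans_le hnk.1
    obtain ⟨v, rfl, hv⟩ := ih k hkn (two_pos.trans_le hk) hkexc
    obtain ⟨Bs, hvBs, hlen⟩ := exists_forall₂_blocks hk hnk
    exact ⟨Bs.flatten, hlen, isMarkedSubstitution_blocks.avoidsPowerCyc_two_flatten hvBs hk hv⟩
end
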